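/- arXiv:2002.09789 — 3 statements merged into one kernel-verified Lean document; each statement's English description precedes it below -/
import Mathlib

section
/- There exists a binary self-dual code of length 68 and minimum (nonzero) weight 12 that has exactly 1710 codewords of weight 12 and exactly 8328 codewords of weight 14 (i.e. a self-dual [68,34,12] code with weight enumerator W_{68,1} with β = 317). -/
/-- The dual of a code (submodule of `ι → R`) with respect to the standard bilinear form. -/
def dualCode {R : Type*} [CommRing R] {ι : Type*} [Fintype ι]
    (C : Submodule R (ι → R)) : Submodule R (ι → R) where
  carrier := {x | ∀ c ∈ C, ∑ i, x i * c i = 0}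
  add_mem' := by
    intro a b ha hb c hc
    simp only [Set.mem_setOf_eq] at ha hb ⊢
    simp [Pi.add_apply, add_mul, Finset.sum_add_distrib, ha c hc, hb c hc]
  zero_mem' := by
    intro c hc
    simp
  smul_mem' := by
    intro r a ha c hc
    simp only [Set.mem_setOf_eq] at ha ⊢
    simp [Pi.smul_apply, smul_eq_mul, mul_assoc, ← Finset.mul_sum, ha c hc]

/-- A code is self-dual if it equals its dual. -/
def IsSelfDual {R : Type*} [CommRing R] {ι : Type*} [Fintype ι]
    (C : Submodule R (ι → R)) : Prop :=
  C = dualCode C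

/-!
If `M` is a square matrix with `M * Mᵀ = 1` over `ZMod 2`, the code `{(u, u ᵥ* M)}` is self-dual,
so all its weights are even. A codeword of weight `2 * a` has weight at most `a` on the left half or
less than `a` on the right half, and `v = u ᵥ* M` exactly when `u = v ᵥ* Mᵀ`. The words of weight at
most 14 are thus found among the sums of at most seven rows of `M` and those of at most six rows of
`Mᵀ`, fewer than nine million sums in total. These are handled all at once, by bitwise operations on
numbers having one binary digit for each sum.
-/

open Finset Matrix

/-! ### Systematic self-dual codes -/

section SystematicCode

variable {R ι κ ν : Type*} [CommRing R] [Fintype ι]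

/-- The encoder with generator matrix `[1 | M]`, sending `u` to `(u, u ᵥ* M)`; the equivalence `e`
says which coordinates carry `u` and which carry `u ᵥ* M`. -/
def systematicEncoder (M : Matrix ι κ R) (e : ι ⊕ κ ≃ ν) : (ι → R) →ₗ[R] (ν → R) :=
  LinearMap.funLeft R R e.symm ∘ₗ
    (LinearEquiv.sumArrowLequivProdArrow ι κ R R).symm.toLinearMap ∘ₗ
      LinearMap.id.prod M.vecMulLinear

@[simp]
theorem systematicEncoder_apply_inl (M : Matrix ι κ R) (e : ι ⊕ κ ≃ ν) (u : ι → R) (i : ι) :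
    systematicEncoder M e u (e (.inl i)) = u i := by
  simp [systematicEncoder]

@[simp]
theorem systematicEncoder_apply_inr (M : Matrix ι κ R) (e : ι ⊕ κ ≃ ν) (u : ι → R) (j : κ) :
    systematicEncoder M e u (e (.inr j)) = (u ᵥ* M) j := by
  simp [systematicEncoder]

theorem systematicEncoder_injective (M : Matrix ι κ R) (e : ι ⊕ κ ≃ ν) :
    Function.Injective (systematicEncoder M e) := fun u v huv ↦ by
  ext i
  simpa using congrFun huv (e (.inl i))

theorem mem_range_systematicEncoder {M : Matrix ι κ R} {e : ι ⊕ κ ≃ ν} {x : ν → R} :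
    x ∈ LinearMap.range (systematicEncoder M e) ↔
      (fun i ↦ x (e (.inl i))) ᵥ* M = fun j ↦ x (e (.inr j)) := by
  constructor
  · rintro ⟨u, rfl⟩
    simp
  · refine fun hx ↦ ⟨fun i ↦ x (e (.inl i)), funext fun p ↦ ?_⟩
    obtain ⟨i | j, rfl⟩ := e.surjective p
    · simp
    · simp [hx]

variable [Fintype κ] [Fintype ν]

theorem mem_dualCode_range_systematicEncoder {M : Matrix ι κ R} {e : ι ⊕ κ ≃ ν} {x : ν → R} :
    x ∈ dualCode (LinearMap.range (systematicEncoder M e)) ↔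
      (fun i ↦ x (e (.inl i))) + M *ᵥ (fun j ↦ x (e (.inr j))) = 0 := by
  have dot_encoder (u : ι → R) : ∑ p, x p * systematicEncoder M e u p =
      ((fun i ↦ x (e (.inl i))) + M *ᵥ (fun j ↦ x (e (.inr j)))) ⬝ᵥ u := by
    rw [add_dotProduct, dotProduct_comm (M *ᵥ _), dotProduct_mulVec, dotProduct_comm (u ᵥ* M),
      ← Equiv.sum_comp e, Fintype.sum_sum_type]
    simp [dotProduct]
  rw [← dotProduct_eq_zero_iff]
  simp only [← dot_encoder]
  exact Set.forall_mem_range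

theorem isSelfDual_range_systematicEncoder [DecidableEq ι] {M : Matrix ι ι R}
    (hM : M * Mᵀ = -1) (e : ι ⊕ ι ≃ ν) :
    IsSelfDual (LinearMap.range (systematicEncoder M e)) := by
  have hM' : Mᵀ * M = -1 := by
    rw [← neg_eq_iff_eq_neg, ← Matrix.neg_mul, mul_eq_one_comm, Matrix.mul_neg, hM, neg_neg]
  ext x
  rw [mem_range_systematicEncoder, mem_dualCode_range_systematicEncoder, ← mulVec_transpose]
  constructor
  · intro hx
    rw [← hx, mulVec_mulVec, hM, neg_mulVec, one_mulVec, add_neg_cancel]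
  · intro hx
    rw [eq_neg_of_add_eq_zero_left hx, mulVec_neg, mulVec_mulVec, hM', neg_mulVec, one_mulVec,
      neg_neg]

end SystematicCode

section Weights

variable {R ι κ ν : Type*} [CommRing R] [DecidableEq R] [Fintype ι] [Fintype κ] [Fintype ν]

theorem hammingNorm_systematicEncoder (M : Matrix ι κ R) (e : ι ⊕ κ ≃ ν) (u : ι → R) :
    hammingNorm (systematicEncoder M e u) = hammingNorm u + hammingNorm (u ᵥ* M) := by
  simp only [hammingNorm, card_filter]
  rw [← Equiv.sum_comp e, Fintype.sum_sum_type]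
  simp

theorem sum_mul_self_eq_hammingNorm (v : ν → ZMod 2) : ∑ i, v i * v i = hammingNorm v := by
  have mul_self : ∀ x : ZMod 2, x * x = if x ≠ 0 then 1 else 0 := by decide
  simp only [mul_self, hammingNorm, natCast_card_filter]

theorem IsSelfDual.even_hammingNorm {C : Submodule (ZMod 2) (ν → ZMod 2)} (hC : IsSelfDual C)
    {v : ν → ZMod 2} (hv : v ∈ C) : Even (hammingNorm v) := by
  have hv' : v ∈ dualCode C := hC ▸ hv
  rw [← ZMod.natCast_eq_zero_iff_even, ← sum_mul_self_eq_hammingNorm]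
  exact hv' v hv

variable [Fintype R] [DecidableEq ι]

/-- The number of words `(u, u ᵥ* M)` of weight `k` on the left half and `l` on the right half. -/
def biweightCount (M : Matrix ι κ R) (k l : ℕ) : ℕ :=
  #{u : ι → R | hammingNorm u = k ∧ hammingNorm (u ᵥ* M) = l}

theorem biweightCount_comm_of_mul_eq_one {M N : Matrix ι ι R} (hMN : M * N = 1) (k l : ℕ) :
    biweightCount M k l = biweightCount N l k := by
  have hNM : N * M = 1 := mul_eq_one_comm.1 hMN
  refine card_nbij' (· ᵥ* M) (· ᵥ* N) ?_ ?_ ?_ ?_ <;> intro u <;>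
    simp +contextual [vecMul_vecMul, hMN, hNM]

theorem ncard_range_systematicEncoder (M : Matrix ι κ R) (e : ι ⊕ κ ≃ ν) (w : ℕ) :
    {v | v ∈ LinearMap.range (systematicEncoder M e) ∧ hammingNorm v = w}.ncard =
      ∑ k ∈ range (w + 1), biweightCount M k (w - k) := by
  have image_eq : {v | v ∈ LinearMap.range (systematicEncoder M e) ∧ hammingNorm v = w} =
      systematicEncoder M e ''
        ({u | hammingNorm u + hammingNorm (u ᵥ* M) = w} : Finset (ι → R)) := by
    ext v
    simp only [LinearMap.mem_range, Set.mem_ofPred_eq, Set.mem_image, coe_filter, mem_univ,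
      true_and, ← hammingNorm_systematicEncoder M e]
    aesop
  have left_weight_le : ∀ u ∈ ({u | hammingNorm u + hammingNorm (u ᵥ* M) = w} : Finset (ι → R)),
      hammingNorm u ∈ range (w + 1) := by
    grind
  rw [image_eq, Set.ncard_image_of_injective _ (systematicEncoder_injective M e),
    Set.ncard_coe_finset, card_eq_sum_card_fiberwise left_weight_le]
  refine sum_congr rfl fun k hk ↦ congrArg card ?_
  grind

theorem ncard_range_systematicEncoder_of_mul_eq_one {M N : Matrix ι ι R} (hMN : M * N = 1)
    (e : ι ⊕ ι ≃ ν) (a b : ℕ) :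
    {v | v ∈ LinearMap.range (systematicEncoder M e) ∧ hammingNorm v = a + b}.ncard =
      ∑ k ∈ range (a + 1), biweightCount M k (a + b - k) +
        ∑ l ∈ range b, biweightCount N l (a + b - l) := by
  rw [ncard_range_systematicEncoder, add_right_comm, sum_range_add, ← sum_range_reflect _ b]
  congr 1
  refine sum_congr rfl fun l hl ↦ ?_
  have hl := mem_range.1 hl
  rw [biweightCount_comm_of_mul_eq_one hMN]
  congr 1 <;> omega

end Weights

section Support

variable {m : ℕ} {κ : Type*} [Fintype κ]

theorem biweightCount_eq_card_powersetCard {ι : Type*} [Fintype ι] [DecidableEq ι]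
    (M : Matrix ι κ (ZMod 2)) (k l : ℕ) :
    biweightCount M k l = #{s ∈ powersetCard k univ | hammingNorm (∑ i ∈ s, M.row i) = l} := by
  have indicator_support (u : ι → ZMod 2) (i : ι) : (if u i ≠ 0 then 1 else 0) = u i := by
    generalize u i = x
    revert x
    decide
  have vecMul_eq (u : ι → ZMod 2) : u ᵥ* M = ∑ i with u i ≠ 0, M.row i := by
    calc u ᵥ* M = ∑ i, (if u i ≠ 0 then (1 : ZMod 2) else 0) • M.row i := by
          simp only [indicator_support]
          exact vecMul_eq_sum u M
      _ = ∑ i with u i ≠ 0, M.row i := by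
          simp only [ite_smul, one_smul, zero_smul, sum_filter]
  refine card_nbij' (fun u ↦ ({i | u i ≠ 0} : Finset ι)) (fun s i ↦ if i ∈ s then 1 else 0)
    ?_ ?_ ?_ ?_
  · intro u
    simp [hammingNorm, vecMul_eq, mem_powersetCard]
  · intro s
    simp [hammingNorm, vecMul_eq, mem_powersetCard]
  · intro u _
    simpa using funext (indicator_support u)
  · intro s _
    simp

theorem biweightCount_eq_countP_sublistsLen (M : Matrix (Fin m) κ (ZMod 2)) (k l : ℕ) :
    biweightCount M k l =
      ((List.finRange m).sublistsLen k).countP fun S ↦ hammingNorm (S.map M.row).sum = l := by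
  let weightIs (s : Multiset (Fin m)) : Prop := hammingNorm (s.map M.row).sum = l
  calc biweightCount M k l = #{s ∈ powersetCard k univ | weightIs s.val} :=
        biweightCount_eq_card_powersetCard M k l
    _ = ((powersetCard k univ).val.map Finset.val).countP weightIs := by
        rw [Multiset.countP_map]
        rfl
    _ = _ := by
        rw [map_val_val_powersetCard, val_univ_fin, Multiset.powersetCard_coe,
          Multiset.coe_countP, List.countP_map]
        rfl

end Support

/-! ### Bit-parallel weight counts -/

/-- A list of bits, stored as its length and the number with these binary digits, low first.
Bitwise operations on numbers then act on all the bits at once. -/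
structure PackedBits where
  /-- The number of bits. -/
  length : ℕ
  /-- The number with the given binary digits. -/
  val : ℕ

namespace PackedBits

variable {α β : Type*}

/-- Packs a list of bits. -/
def ofList (l : List Bool) : PackedBits := ⟨l.length, l.foldr Nat.bit 0⟩

/-- A packed list of zero bits. -/
def zeros (n : ℕ) : PackedBits := ⟨n, 0⟩

instance : Append PackedBits := ⟨fun x y ↦ ⟨x.length + y.length, x.val ||| y.val <<< x.length⟩⟩

instance : XorOp PackedBits := ⟨fun x y ↦ ⟨x.length, x.val ^^^ y.val⟩⟩

instance : AndOp PackedBits := ⟨fun x y ↦ ⟨x.length, x.val &&& y.val⟩⟩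

instance : Complement PackedBits := ⟨fun x ↦ ⟨x.length, x.val ^^^ (2 ^ x.length - 1)⟩⟩

/-- `popCount d x` is the number of ones in the binary expansion of `x < 2 ^ 2 ^ d`. -/
def popCount : ℕ → ℕ → ℕ
  | 0, x => x
  | d + 1, x => if x = 0 then 0 else popCount d (x % 2 ^ 2 ^ d) + popCount d (x >>> 2 ^ d)

/-- The number of ones in a packed list of bits. -/
def count (x : PackedBits) : ℕ := popCount (x.length.log2 + 1) x.val

theorem testBit_val_ofList (l : List Bool) (i : ℕ) : (ofList l).val.testBit i = l.getD i false := by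
  induction l generalizing i with
  | nil => simp [ofList]
  | cons b l ih =>
    cases i with
    | zero => exact Nat.testBit_bit_zero ..
    | succ i => exact (Nat.testBit_bit_succ ..).trans (ih i)

theorem length_ofList (l : List Bool) : (ofList l).length = l.length := rfl

theorem eq_ofList {x : PackedBits} {l : List Bool} (hlength : x.length = l.length)
    (htestBit : ∀ i, x.val.testBit i = l.getD i false) : x = ofList l :=
  congrArg₂ mk hlength <| Nat.eq_of_testBit_eq fun i ↦
    (htestBit i).trans (testBit_val_ofList l i).symm

theorem ofList_append (l₁ l₂ : List Bool) : ofList (l₁ ++ l₂) = ofList l₁ ++ ofList l₂ := by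
  refine (eq_ofList List.length_append.symm fun i ↦ (Nat.testBit_or ..).trans ?_).symm
  rw [Nat.testBit_shiftLeft, testBit_val_ofList, testBit_val_ofList, length_ofList]
  rcases lt_or_ge i l₁.length with h | h <;>
    simp [h, List.getElem?_append_left, List.getElem?_append_right]

theorem ofList_map_xor (f g : α → Bool) (L : List α) :
    ofList (L.map f) ^^^ ofList (L.map g) = ofList (L.map fun a ↦ f a ^^ g a) := by
  refine eq_ofList ((List.length_map f).trans (List.length_map _).symm) fun i ↦
    (Nat.testBit_xor ..).trans ?_
  rw [testBit_val_ofList, testBit_val_ofList]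
  cases h : L[i]? <;> simp [h]

theorem ofList_map_and (f g : α → Bool) (L : List α) :
    ofList (L.map f) &&& ofList (L.map g) = ofList (L.map fun a ↦ f a && g a) := by
  refine eq_ofList ((List.length_map f).trans (List.length_map _).symm) fun i ↦
    (Nat.testBit_and ..).trans ?_
  rw [testBit_val_ofList, testBit_val_ofList]
  cases h : L[i]? <;> simp [h]

theorem complement_ofList (l : List Bool) : ~~~ofList l = ofList (l.map not) := by
  refine eq_ofList (List.length_map _).symm fun i ↦ (Nat.testBit_xor ..).trans ?_
  rw [testBit_val_ofList, Nat.testBit_two_pow_sub_one, length_ofList]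
  rcases lt_or_ge i l.length with h | h <;> simp [h, h.not_gt]

theorem zeros_length (L : List α) : zeros L.length = ofList (L.map fun _ ↦ false) := by
  refine eq_ofList (List.length_map _).symm fun i ↦ (Nat.zero_testBit i).trans ?_
  simp

theorem val_ofList_take (l : List Bool) (n : ℕ) :
    (ofList (l.take n)).val = (ofList l).val % 2 ^ n := by
  refine Nat.eq_of_testBit_eq fun i ↦ ?_
  simp only [Nat.testBit_mod_two_pow, testBit_val_ofList]
  rcases lt_or_ge i n with h | h <;> simp [h, h.not_gt]

theorem val_ofList_drop (l : List Bool) (n : ℕ) :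
    (ofList (l.drop n)).val = (ofList l).val >>> n := by
  refine Nat.eq_of_testBit_eq fun i ↦ ?_
  simp only [Nat.testBit_shiftRight, testBit_val_ofList]
  simp

theorem count_true_eq_zero_of_val_ofList_eq_zero {l : List Bool} (h : (ofList l).val = 0) :
    l.count true = 0 := by
  refine List.count_eq_zero.2 fun hl ↦ ?_
  obtain ⟨i, hi, hi'⟩ := List.getElem_of_mem hl
  have := testBit_val_ofList l i
  simp [h, hi, hi'] at this

theorem popCount_val_ofList (d : ℕ) (l : List Bool) (hl : l.length ≤ 2 ^ d) :
    popCount d (ofList l).val = l.count true := by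
  induction d generalizing l with
  | zero =>
    match l, hl with
    | [], _ => rfl
    | [b], _ => cases b <;> rfl
  | succ d ih =>
    rw [popCount]
    split_ifs with h
    · exact (count_true_eq_zero_of_val_ofList_eq_zero h).symm
    · rw [← val_ofList_take, ← val_ofList_drop, ih _ (List.length_take_le ..),
        ih _ (by rw [List.length_drop]; lia), ← List.count_append, List.take_append_drop]

theorem count_ofList (l : List Bool) : (ofList l).count = l.count true :=
  popCount_val_ofList _ l Nat.lt_log2_self.le

/-- The numbers `w a`, for `a` in `L`, in bit-sliced form: entry `i` of the result holds digit `i`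
of all of them, for `i < d`. -/
def bitSlices : ℕ → (α → ℕ) → List α → List PackedBits
  | 0, _, _ => []
  | d + 1, w, L => ofList (L.map fun a ↦ (w a).testBit 0) :: bitSlices d (fun a ↦ w a / 2) L

/-- Adds one bit to each of a list of bit-sliced numbers, dropping the last carry. -/
def addBit : List PackedBits → PackedBits → List PackedBits
  | [], _ => []
  | s :: ss, b => (s ^^^ b) :: addBit ss (s &&& b)

/-- Marks which of `n` bit-sliced numbers are equal to `l`. -/
def eqMask (n : ℕ) : List PackedBits → ℕ → PackedBits
  | [], l => if l = 0 then ~~~zeros n else zeros n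
  | s :: ss, l => (if l.testBit 0 then s else ~~~s) &&& eqMask n ss (l / 2)

theorem bitSlices_zero (d : ℕ) (L : List α) :
    bitSlices d (fun _ ↦ 0) L = List.replicate d (zeros L.length) := by
  induction d with
  | zero => rfl
  | succ d ih => simp [bitSlices, ih, zeros_length, List.replicate_succ]

theorem addBit_bitSlices (d : ℕ) (w : α → ℕ) (f : α → Bool) (L : List α) :
    addBit (bitSlices d w L) (ofList (L.map f)) = bitSlices d (fun a ↦ w a + (f a).toNat) L := by
  have testBit_add (x : ℕ) (b : Bool) : (x.testBit 0 ^^ b) = (x + b.toNat).testBit 0 := by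
    cases b <;> grind
  have add_div (x : ℕ) (b : Bool) : x / 2 + (x.testBit 0 && b).toNat = (x + b.toNat) / 2 := by
    cases b <;> grind
  induction d generalizing w f with
  | zero => rfl
  | succ d ih =>
    simp only [bitSlices, addBit, ofList_map_xor, ofList_map_and, ih, testBit_add, add_div]

theorem foldr_addBit_bitSlices (d : ℕ) (f : β → α → Bool) (J : List β) (L : List α) :
    J.foldr (fun j ss ↦ addBit ss (ofList (L.map (f j)))) (bitSlices d (fun _ ↦ 0) L) =
      bitSlices d (fun a ↦ J.countP (f · a)) L := by
  induction J with
  | nil => rfl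
  | cons j J ih => simp [ih, addBit_bitSlices, List.countP_cons, Bool.toNat, Bool.cond_eq_ite]

theorem eqMask_bitSlices (d : ℕ) (w : α → ℕ) (L : List α) (l : ℕ) :
    eqMask L.length (bitSlices d w L) l = ofList (L.map fun a ↦ decide (w a % 2 ^ d = l)) := by
  induction d generalizing w l with
  | zero =>
    simp only [eqMask, bitSlices, zeros_length, complement_ofList, List.map_map, pow_zero,
      Nat.mod_one]
    split_ifs with h
    · simp [h, Function.comp_def]
    · simp [Ne.symm h]
  | succ d ih =>
    have decide_mod_eq (x : ℕ) : decide (x % 2 ^ (d + 1) = l) =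
        (x.testBit 0 == l.testBit 0 && decide (x / 2 % 2 ^ d = l / 2)) := by
      rw [pow_succ', Nat.mod_mul]
      grind
    simp only [eqMask, bitSlices, ih, decide_mod_eq, complement_ofList, List.map_map]
    cases l.testBit 0 <;> simp only [ofList_map_and, Function.comp_def, beq_true, beq_false,
      reduceIte, Bool.false_eq_true]

end PackedBits

open PackedBits

section ParityTable

variable {ι : Type*} {m n : ℕ}

/-- The sums of `c` over the sublists of `L` of length `k`, in the order of `List.sublistsLen`,
as packed bits. -/
def sublistSums (c : ι → ZMod 2) (L : List ι) (k : ℕ) : PackedBits :=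
  ofList ((L.sublistsLen k).map fun S ↦ decide ((S.map c).sum ≠ 0))

/-- The list of `sublistSums c L i` for `i ≤ k`, computed like a row of Pascal's triangle. -/
def sublistSumsTable (c : ι → ZMod 2) (k : ℕ) : List ι → List PackedBits
  | [] => ofList [false] :: List.replicate k (zeros 0)
  | i :: L =>
    List.zipWith (fun x y ↦ x ++ if c i = 0 then y else ~~~y)
      (sublistSumsTable c k L) (zeros 0 :: sublistSumsTable c k L)

theorem sublistSums_cons_succ (c : ι → ZMod 2) (i : ι) (L : List ι) (k : ℕ) :
    sublistSums c (i :: L) (k + 1) = sublistSums c L (k + 1) ++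
      if c i = 0 then sublistSums c L k else ~~~sublistSums c L k := by
  have eq_one_of_ne_zero : ∀ x : ZMod 2, x ≠ 0 → x = 1 := by decide
  have one_add_eq_zero : ∀ x : ZMod 2, 1 + x = 0 ↔ x ≠ 0 := by decide
  simp only [sublistSums, List.sublistsLen_succ_cons, List.map_append, List.map_map,
    ofList_append, complement_ofList]
  split_ifs with h
  · simp [h, Function.comp_def]
  · simp [eq_one_of_ne_zero _ h, Function.comp_def, one_add_eq_zero]

theorem sublistSumsTable_eq (c : ι → ZMod 2) (k : ℕ) (L : List ι) :
    sublistSumsTable c k L = (List.range (k + 1)).map (sublistSums c L) := by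
  have sublistSums_nil_succ (j : ℕ) : sublistSums c [] (j + 1) = zeros 0 := rfl
  have sublistSums_zero (L : List ι) : sublistSums c L 0 = ofList [false] := by
    simp [sublistSums]
  have append_ite (x : Prop) [Decidable x] :
      ofList [false] ++ (if x then zeros 0 else ~~~zeros 0) = ofList [false] := by
    split_ifs <;> rfl
  induction L with
  | nil =>
    simp [sublistSumsTable, List.range_succ_eq_map, sublistSums_zero, sublistSums_nil_succ,
      Function.comp_def, List.map_const']
  | cons i L ih =>
    rw [sublistSumsTable, ih]
    refine List.ext_getElem (by simp) fun j _ _ ↦ ?_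
    cases j with
    | zero => simp [sublistSums_zero, append_ite]
    | succ j => simp [sublistSums_cons_succ]

/-- The bit-sliced weights of the sums of `k` rows of `M`. -/
def rowSumWeights (M : Matrix (Fin m) (Fin n) (ZMod 2)) (k : ℕ) : List PackedBits :=
  (List.finRange n).foldr
    (fun j ss ↦ addBit ss ((sublistSumsTable (M · j) k (List.finRange m)).getD k (zeros 0)))
    (List.replicate (n.log2 + 1) (zeros (m.choose k)))

/-- A form of `biweightCount` that evaluates quickly, see `packedBiweightCount_eq`. -/
def packedBiweightCount (M : Matrix (Fin m) (Fin n) (ZMod 2)) (k l : ℕ) : ℕ :=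
  (eqMask (m.choose k) (rowSumWeights M k) l).count

theorem hammingNorm_sum_map_row (M : Matrix (Fin m) (Fin n) (ZMod 2)) (S : List (Fin m)) :
    hammingNorm (S.map M.row).sum =
      (List.finRange n).countP fun j ↦ (S.map (M · j)).sum ≠ 0 := by
  have sum_apply (j : Fin n) : (S.map M.row).sum j = (S.map (M · j)).sum :=
    (map_list_sum (Pi.evalAddMonoidHom (fun _ ↦ ZMod 2) j) _).trans (by rw [List.map_map]; rfl)
  simp only [hammingNorm, card_def, filter_val, ← Multiset.countP_eq_card_filter, val_univ_fin,
    Multiset.coe_countP, sum_apply]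

theorem rowSumWeights_eq (M : Matrix (Fin m) (Fin n) (ZMod 2)) (k : ℕ) :
    rowSumWeights M k = bitSlices (n.log2 + 1) (fun S ↦ hammingNorm (S.map M.row).sum)
      ((List.finRange m).sublistsLen k) := by
  have length_eq : m.choose k = ((List.finRange m).sublistsLen k).length := by simp
  simp only [rowSumWeights, sublistSumsTable_eq, length_eq, ← bitSlices_zero,
    hammingNorm_sum_map_row, ← foldr_addBit_bitSlices]
  simp [sublistSums]

theorem packedBiweightCount_eq (M : Matrix (Fin m) (Fin n) (ZMod 2)) (k l : ℕ) :
    packedBiweightCount M k l = biweightCount M k l := by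
  have length_eq : m.choose k = ((List.finRange m).sublistsLen k).length := by simp
  have mod_eq (S : List (Fin m)) : hammingNorm (S.map M.row).sum % 2 ^ (n.log2 + 1) =
      hammingNorm (S.map M.row).sum := by
    have hammingNorm_le : hammingNorm (S.map M.row).sum ≤ n :=
      hammingNorm_le_card_fintype.trans_eq (Fintype.card_fin n)
    exact Nat.mod_eq_of_lt (hammingNorm_le.trans_lt Nat.lt_log2_self)
  rw [packedBiweightCount, rowSumWeights_eq, length_eq, eqMask_bitSlices, count_ofList,
    biweightCount_eq_countP_sublistsLen]
  simp [mod_eq, List.count, Function.comp_def]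

end ParityTable

/-- The number of words of weight `2 * a` in the code generated by `[1 | M]`, for `M * Mᵀ = 1`. -/
def packedEvenWeightCount {n : ℕ} (M : Matrix (Fin n) (Fin n) (ZMod 2)) (a : ℕ) : ℕ :=
  ∑ k ∈ range (a + 1), packedBiweightCount M k (a + a - k) +
    ∑ l ∈ range a, packedBiweightCount Mᵀ l (a + a - l)

theorem ncard_range_systematicEncoder_eq_packed {n : ℕ} {ν : Type*} [Fintype ν]
    {M : Matrix (Fin n) (Fin n) (ZMod 2)} (hM : M * Mᵀ = 1) (e : Fin n ⊕ Fin n ≃ ν) (a : ℕ) :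
    {v | v ∈ LinearMap.range (systematicEncoder M e) ∧ hammingNorm v = a + a}.ncard =
      packedEvenWeightCount M a := by
  simp only [ncard_range_systematicEncoder_of_mul_eq_one hM, packedEvenWeightCount,
    packedBiweightCount_eq]

/-! ### A code of length 68 -/

/-- The right half of the generator matrix of a self-dual `[68, 34, 12]` code; the entries of row
`i` are the binary digits of the `i`-th number, low first. -/
def code68Matrix : Matrix (Fin 34) (Fin 34) (ZMod 2) :=
  .of fun i j ↦ if (![
    8550095006, 2767467051, 3597826285, 13203618580, 13522335272, 3954643133,
    15434635424, 8841702363, 14493901442, 1623400549, 10191081631, 17166963722,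
    11303791363, 6380959312, 4398210996, 11475960709, 4707942096, 5120916896,
    5946866496, 7598765696, 2837837723, 861782169, 12756078951, 5133398412,
    9616829665, 437238403, 12175064287, 9478825221, 14350083762, 13679978492,
    7519215534, 15052305330, 10749601398, 2135300488] i).testBit j then 1 else 0

theorem code68Matrix_mul_transpose : code68Matrix * code68Matrixᵀ = 1 := by
  decide +kernel

theorem packedEvenWeightCount_code68Matrix (a : Fin 8) :
    packedEvenWeightCount code68Matrix a = ![1, 0, 0, 0, 0, 0, 1710, 8328] a := by
  revert a
  decide +kernel

/-- A self-dual `[68, 34, 12]` code. -/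
def code68 : Submodule (ZMod 2) (Fin 68 → ZMod 2) :=
  LinearMap.range (systematicEncoder code68Matrix finSumFinEquiv)

theorem isSelfDual_code68 : IsSelfDual code68 :=
  isSelfDual_range_systematicEncoder
    (code68Matrix_mul_transpose.trans (CharTwo.neg_eq 1).symm) finSumFinEquiv

theorem ncard_code68_hammingNorm_eq (a : Fin 8) :
    {v | v ∈ code68 ∧ hammingNorm v = a + a}.ncard = ![1, 0, 0, 0, 0, 0, 1710, 8328] a :=
  (ncard_range_systematicEncoder_eq_packed code68Matrix_mul_transpose finSumFinEquiv a).trans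
    (packedEvenWeightCount_code68Matrix a)

theorem twelve_le_hammingNorm_of_mem_code68 {v : Fin 68 → ZMod 2} (hv : v ∈ code68)
    (hv0 : v ≠ 0) : 12 ≤ hammingNorm v := by
  by_contra! hlt
  obtain ⟨a, ha⟩ := isSelfDual_code68.even_hammingNorm hv
  have a_pos : 0 < a := by
    have := hammingNorm_pos_iff.2 hv0
    lia
  have no_words : ∀ b : Fin 8, 0 < b.val → b.val < 6 →
      ![1, 0, 0, 0, 0, 0, 1710, 8328] b = 0 := by decide
  have card_eq_zero : {v | v ∈ code68 ∧ hammingNorm v = a + a}.ncard = 0 :=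
    (ncard_code68_hammingNorm_eq ⟨a, by lia⟩).trans (no_words _ a_pos (by simp only; lia))
  exact Set.eq_empty_iff_forall_notMem.1 ((Set.ncard_eq_zero).1 card_eq_zero) v ⟨hv, ha⟩

/-- There exists a binary self-dual `[68, 34, 12]` code with weight enumerator
`W_{68,1}` ( β = 317): minimum nonzero weight 12, exactly 1710 codewords of weight 12
and exactly 8328 codewords of weight 14. -/
theorem exists_selfDual_68_13 :
    ∃ C : Submodule (ZMod 2) (Fin 68 → ZMod 2),
      IsSelfDual C ∧
      (∀ v ∈ C, v ≠ 0 → 12 ≤ hammingNorm v) ∧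
      (∃ v ∈ C, hammingNorm v = 12) ∧
      {v | v ∈ C ∧ hammingNorm v = 12}.ncard = 1710 ∧
      {v | v ∈ C ∧ hammingNorm v = 14}.ncard = 8328 := by
  have card_weight_12 : {v | v ∈ code68 ∧ hammingNorm v = 12}.ncard = 1710 :=
    ncard_code68_hammingNorm_eq 6
  have card_weight_14 : {v | v ∈ code68 ∧ hammingNorm v = 14}.ncard = 8328 :=
    ncard_code68_hammingNorm_eq 7
  have exists_weight_12 : {v | v ∈ code68 ∧ hammingNorm v = 12}.Nonempty :=
    Set.nonempty_of_ncard_ne_zero (by rw [card_weight_12]; decide)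
  exact ⟨code68, isSelfDual_code68, fun _ ↦ twelve_le_hammingNorm_of_mem_code68,
    exists_weight_12, card_weight_12, card_weight_14⟩
end

section
/- There exists a binary self-dual code of length 68 and minimum (nonzero) weight 12 that has exactly 1062 codewords of weight 12 and exactly 11928 codewords of weight 14 (i.e. a self-dual [68,34,12] code with weight enumerator W_{68,2} with γ = 7 and β = 155). -/
/-!
The generator matrix is `[I | A]`, where `A * Aᵀ = 1`, so that the code is self-dual. A codeword
`(u, u ᵥ* A)` of weight at most 14 has weight at most 7 on its left half or at most 6 on its right
half. As `u` is recovered from `u ᵥ* A` through `Aᵀ`, the words of the second kind are codewords of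
`[I | Aᵀ]` with the two halves exchanged, so the number of words of each weight up to 14 is found by
enumerating the sums of at most 7 rows of `A` and of at most 6 rows of `Aᵀ`. This enumeration is
bit-sliced: all sums of `w` rows are processed in parallel, one column at a time, a column being
represented by a single natural number with one binary digit for each `w`-element set of rows.
-/

namespace SystematicCode

open Matrix Finset

section Code

variable {R : Type*} {n m : ℕ}

/-- The systematic code of length `n + m` with redundancy matrix `A`, i.e. the code generated by
`[I | A]`. It is encoded by its parity checks: the last `m` coordinates `y` of a codeword are
determined by the first `n` coordinates `u` through `y = u ᵥ* A`. -/
def systematicCode [CommRing R] (A : Matrix (Fin n) (Fin m) R) :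
    Submodule R (Fin (n + m) → R) :=
  LinearMap.eqLocus (LinearMap.funLeft R R (Fin.natAdd n))
    (A.vecMulLinear ∘ₗ LinearMap.funLeft R R (Fin.castAdd m))

theorem mem_systematicCode [CommRing R] {A : Matrix (Fin n) (Fin m) R} {x : Fin (n + m) → R} :
    x ∈ systematicCode A ↔ x ∘ Fin.natAdd n = (x ∘ Fin.castAdd m) ᵥ* A :=
  Iff.rfl

/-- The systematic encoder `u ↦ (u, u ᵥ* A)`, which parametrizes `systematicCode A` by the
information vectors `u`. -/
def encode [CommRing R] (A : Matrix (Fin n) (Fin m) R) (u : Fin n → R) : Fin (n + m) → R :=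
  Fin.append u (u ᵥ* A)

theorem encode_comp_castAdd [CommRing R] (A : Matrix (Fin n) (Fin m) R) (u : Fin n → R) :
    encode A u ∘ Fin.castAdd m = u :=
  funext fun i ↦ Fin.append_left u _ i

theorem encode_comp_natAdd [CommRing R] (A : Matrix (Fin n) (Fin m) R) (u : Fin n → R) :
    encode A u ∘ Fin.natAdd n = u ᵥ* A :=
  funext fun j ↦ Fin.append_right u _ j

theorem encode_mem_systematicCode [CommRing R] (A : Matrix (Fin n) (Fin m) R) (u : Fin n → R) :
    encode A u ∈ systematicCode A := by
  rw [mem_systematicCode, encode_comp_natAdd, encode_comp_castAdd]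

theorem encode_injective [CommRing R] (A : Matrix (Fin n) (Fin m) R) :
    Function.Injective (encode A) := fun u v huv ↦ by
  simpa only [encode_comp_castAdd] using congrArg (· ∘ Fin.castAdd m) huv

theorem encode_of_mem_systematicCode [CommRing R] {A : Matrix (Fin n) (Fin m) R}
    {x : Fin (n + m) → R} (hx : x ∈ systematicCode A) : encode A (x ∘ Fin.castAdd m) = x := by
  rw [encode, ← mem_systematicCode.mp hx]
  exact Fin.append_castAdd_natAdd

theorem mem_dualCode_systematicCode_iff [CommRing R] {A : Matrix (Fin n) (Fin m) R}
    {x : Fin (n + m) → R} :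
    x ∈ dualCode (systematicCode A) ↔ x ∘ Fin.castAdd m + A *ᵥ (x ∘ Fin.natAdd n) = 0 := by
  have inner_encode (u : Fin n → R) :
      ∑ i, x i * encode A u i = (x ∘ Fin.castAdd m + A *ᵥ (x ∘ Fin.natAdd n)) ⬝ᵥ u := by
    rw [add_dotProduct, dotProduct_comm (A *ᵥ _), dotProduct_mulVec, dotProduct_comm (u ᵥ* A),
      Fin.sum_univ_add]
    simp only [encode, Fin.append_left, Fin.append_right, dotProduct, Function.comp_apply]
  constructor
  · intro hx
    refine dotProduct_eq_zero _ fun u ↦ ?_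
    rw [← inner_encode]
    exact hx _ (encode_mem_systematicCode A u)
  · intro hx c hc
    rw [← encode_of_mem_systematicCode hc, inner_encode, hx, zero_dotProduct]

theorem isSelfDual_systematicCode [CommRing R] {A : Matrix (Fin n) (Fin n) R}
    (hA : A * Aᵀ = -1) : IsSelfDual (systematicCode A) := by
  have hA' : Aᵀ * A = -1 := by
    rw [← neg_eq_iff_eq_neg, ← neg_mul, mul_eq_one_comm, mul_neg, hA, neg_neg]
  ext x
  rw [mem_systematicCode, mem_dualCode_systematicCode_iff]
  constructor
  · intro hx
    rw [hx, ← mulVec_transpose, mulVec_mulVec, hA, neg_mulVec, one_mulVec, add_neg_cancel]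
  · intro hx
    rw [eq_neg_of_add_eq_zero_left hx, neg_vecMul, ← mulVec_transpose, mulVec_mulVec, hA',
      neg_mulVec, one_mulVec, neg_neg]

theorem hammingNorm_append [Zero R] [DecidableEq R] (u : Fin n → R) (v : Fin m → R) :
    hammingNorm (Fin.append u v) = hammingNorm u + hammingNorm v := by
  simp only [hammingNorm, card_filter, Fin.sum_univ_add, Fin.append_left, Fin.append_right]

theorem hammingNorm_eq_countP_finRange [Zero R] [DecidableEq R] (v : Fin m → R) :
    hammingNorm v = (List.finRange m).countP fun j ↦ v j ≠ 0 := by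
  rw [← Multiset.coe_countP, ← val_univ_fin, Multiset.countP_eq_card_filter]
  rfl

theorem le_hammingNorm_of_ncard_eq_zero [Zero R] [Finite R] [DecidableEq R]
    {ι : Type*} [Fintype ι] {C : Set (ι → R)} {d : ℕ}
    (hC : ∀ s, 0 < s → s < d → {v | v ∈ C ∧ hammingNorm v = s}.ncard = 0)
    {v : ι → R} (hv : v ∈ C) (hv0 : v ≠ 0) : d ≤ hammingNorm v := by
  by_contra! hlt
  have hempty := hC _ (hammingNorm_pos_iff.mpr hv0) hlt
  rw [Set.ncard_eq_zero (Set.toFinite _)] at hempty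
  exact Set.eq_empty_iff_forall_notMem.mp hempty v ⟨hv, rfl⟩

end Code

section SplitWeight

variable {R ι κ : Type*} [DecidableEq R] [Fintype R] [Fintype ι] [DecidableEq ι] [Fintype κ]

/-- The coefficient at `(w, t)` of the split weight enumerator of the code generated by `[I | A]`:
the number of codewords with weight `w` on the information part and `t` on the redundancy part. -/
def splitWeightCount [Semiring R] (A : Matrix ι κ R) (w t : ℕ) : ℕ :=
  #{u : ι → R | hammingNorm u = w ∧ hammingNorm (u ᵥ* A) = t}

theorem splitWeightCount_swap_of_mul_eq_one [CommRing R] {A B : Matrix ι ι R}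
    (hAB : A * B = 1) (w t : ℕ) : splitWeightCount A w t = splitWeightCount B t w := by
  have hBA : B * A = 1 := mul_eq_one_comm.mp hAB
  refine card_nbij' (· ᵥ* A) (· ᵥ* B) ?_ ?_ ?_ ?_ <;> intro u <;>
    simp +contextual [vecMul_vecMul, hAB, hBA]

theorem ncard_systematicCode_hammingNorm_eq [CommRing R] {n m : ℕ}
    (A : Matrix (Fin n) (Fin m) R) (s : ℕ) :
    {v | v ∈ systematicCode A ∧ hammingNorm v = s}.ncard =
      ∑ p ∈ antidiagonal s, splitWeightCount A p.1 p.2 := by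
  have image_encode : {v | v ∈ systematicCode A ∧ hammingNorm v = s} =
      encode A '' ({u | hammingNorm u + hammingNorm (u ᵥ* A) = s} : Finset (Fin n → R)) := by
    ext v
    simp only [Set.mem_ofPred_eq, coe_filter, mem_univ, true_and, Set.mem_image,
      ← hammingNorm_append]
    constructor
    · rintro ⟨hv, hs⟩
      have hencode := encode_of_mem_systematicCode hv
      exact ⟨_, by rwa [← encode, hencode], hencode⟩
    · rintro ⟨u, hu, rfl⟩
      exact ⟨encode_mem_systematicCode A u, hu⟩
  rw [image_encode, Set.ncard_image_of_injective _ (encode_injective A), Set.ncard_coe_finset,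
    card_eq_sum_card_fiberwise (f := fun u ↦ (hammingNorm u, hammingNorm (u ᵥ* A)))
      (t := antidiagonal s) (fun u hu ↦ by simpa using hu)]
  refine sum_congr rfl fun p hp ↦ ?_
  rw [splitWeightCount, filter_filter]
  congr 1
  ext u
  rw [HasAntidiagonal.mem_antidiagonal] at hp
  simp only [mem_filter, mem_univ, true_and, Prod.ext_iff]
  omega

theorem splitWeightCount_eq_card_powersetCard (A : Matrix ι κ (ZMod 2)) (w t : ℕ) :
    splitWeightCount A w t =
      #{s ∈ powersetCard w (univ : Finset ι) | hammingNorm (∑ i ∈ s, A.row i) = t} := by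
  have mul_eq_ite : ∀ a b : ZMod 2, a * b = if a ≠ 0 then b else 0 := by decide
  have ite_ne_zero : ∀ a : ZMod 2, (if a ≠ 0 then 1 else 0) = a := by decide
  have vecMul_eq (u : ι → ZMod 2) : u ᵥ* A = ∑ i with u i ≠ 0, A.row i := by
    funext j
    simp only [vecMul, dotProduct, mul_eq_ite, Finset.sum_apply, sum_filter, row_apply]
  refine card_nbij' (fun u ↦ ({i | u i ≠ 0} : Finset ι)) (fun s i ↦ if i ∈ s then 1 else 0)
    ?_ ?_ ?_ ?_
  · intro u
    simp [vecMul_eq, hammingNorm]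
  · intro s
    simp [vecMul_eq, hammingNorm]
  · intro u _
    funext i
    simpa using ite_ne_zero (u i)
  · intro s _
    simp

theorem card_filter_powersetCard_univ_eq_countP {n : ℕ} (w : ℕ)
    (p : Multiset (Fin n) → Prop) [DecidablePred p] :
    #{s ∈ powersetCard w (univ : Finset (Fin n)) | p s.val} =
      ((List.finRange n).sublistsLen w).countP fun s : List (Fin n) ↦ p s :=
  calc
    _ = ((powersetCard w univ).val.map val).countP p := by
      rw [Multiset.countP_map]; rfl
    _ = Multiset.countP p (((List.finRange n).sublistsLen w).map Multiset.ofList) := by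
      rw [map_val_val_powersetCard, val_univ_fin, Multiset.powersetCard_coe]
    _ = _ := by rw [Multiset.coe_countP, List.countP_map]; rfl

theorem splitWeightCount_eq_countP_sublistsLen {n m : ℕ} (A : Matrix (Fin n) (Fin m) (ZMod 2))
    (w t : ℕ) :
    splitWeightCount A w t = ((List.finRange n).sublistsLen w).countP fun s ↦
      decide ((List.finRange m).countP (fun j ↦ decide ((s.map (A · j)).sum ≠ 0)) = t) := by
  rw [splitWeightCount_eq_card_powersetCard]
  refine (card_filter_powersetCard_univ_eq_countP w
    fun s ↦ hammingNorm (s.map A.row).sum = t).trans ?_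
  simp only [hammingNorm_eq_countP_finRange, Multiset.map_coe, Multiset.sum_coe,
    Pi.list_sum_apply, List.map_map, Function.comp_def, row_apply]

end SplitWeight

section Bits

/-- The natural number whose binary digits, least significant first, are the entries of a list. The
values of a predicate on a list of subsets are packed in this way, so that one machine operation
acts on all the subsets at once. -/
def packBits (bs : List Bool) : ℕ :=
  bs.foldr Nat.bit 0

theorem packBits_nil : packBits [] = 0 := rfl

theorem packBits_cons (b : Bool) (bs : List Bool) :
    packBits (b :: bs) = Nat.bit b (packBits bs) := rfl

theorem testBit_packBits (bs : List Bool) (i : ℕ) :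
    (packBits bs).testBit i = bs.getD i false := by
  induction bs generalizing i with
  | nil => simp [packBits_nil]
  | cons b bs ih =>
    cases i with
    | zero => simp [packBits_cons]
    | succ i => simpa [packBits_cons, Nat.testBit_bit_succ] using ih i

theorem packBits_append (bs cs : List Bool) :
    packBits (bs ++ cs) = packBits bs + packBits cs <<< bs.length := by
  induction bs with
  | nil => simp [packBits_nil]
  | cons b bs ih =>
    rw [List.cons_append, packBits_cons, packBits_cons, ih, Nat.bit_val, Nat.bit_val,
      List.length_cons, Nat.shiftLeft_eq, Nat.shiftLeft_eq]
    ring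

theorem packBits_map_not (bs : List Bool) :
    packBits (bs.map not) = 2 ^ bs.length - 1 - packBits bs := by
  suffices packBits (bs.map not) + packBits bs + 1 = 2 ^ bs.length by omega
  induction bs with
  | nil => rfl
  | cons b bs ih =>
    rw [List.map_cons, packBits_cons, packBits_cons, List.length_cons, pow_succ, ← ih,
      Nat.bit_val, Nat.bit_val]
    cases b <;> simp only [Bool.not_false, Bool.not_true, Bool.toNat_false, Bool.toNat_true] <;>
      ring

theorem packBits_replicate_false (n : ℕ) : packBits (List.replicate n false) = 0 := by
  induction n with
  | zero => rfl
  | succ n ih => rw [List.replicate_succ, packBits_cons, ih, Nat.bit_false_zero]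

theorem packBits_replicate_true (n : ℕ) : packBits (List.replicate n true) = 2 ^ n - 1 := by
  simpa [packBits_replicate_false] using packBits_map_not (List.replicate n false)

section Map

variable {α : Type*} (L : List α)

theorem packBits_map_xor (f g : α → Bool) :
    packBits (L.map fun a ↦ f a ^^ g a) = packBits (L.map f) ^^^ packBits (L.map g) := by
  induction L with
  | nil => simp [packBits_nil]
  | cons a L ih => simp only [List.map_cons, packBits_cons, ih, Nat.xor_bit]

theorem packBits_map_and (f g : α → Bool) :
    packBits (L.map fun a ↦ f a && g a) = packBits (L.map f) &&& packBits (L.map g) := by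
  induction L with
  | nil => simp [packBits_nil]
  | cons a L ih => simp only [List.map_cons, packBits_cons, ih, Nat.land_bit]

end Map

/-- The number of ones among the `2 ^ k` lowest binary digits of `x`, computed by halving the word
and skipping the halves that vanish. -/
def popcount : ℕ → ℕ → ℕ
  | 0, x => x % 2
  | k + 1, x => if x = 0 then 0 else popcount k (x % 2 ^ 2 ^ k) + popcount k (x / 2 ^ 2 ^ k)

theorem popcount_eq_count_testBit (k x : ℕ) :
    popcount k x = Nat.count (x.testBit ·) (2 ^ k) := by
  induction k generalizing x with
  | zero =>
    rw [popcount, pow_zero, Nat.count_one]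
    obtain h | h := Nat.mod_two_eq_zero_or_one x <;> simp [Nat.testBit_zero, h]
  | succ k ih =>
    rw [popcount]
    split_ifs with hx
    · simp [hx]
    · have count_low : Nat.count ((x % 2 ^ 2 ^ k).testBit ·) (2 ^ k) =
          Nat.count (x.testBit ·) (2 ^ k) := by
        simp only [Nat.count_eq_card_filter_range]
        exact congrArg card (filter_congr fun i hi ↦ by
          simp [Nat.testBit_mod_two_pow, mem_range.mp hi])
      rw [ih, ih, pow_succ, mul_two, Nat.count_add, count_low]
      simp only [Nat.testBit_div_two_pow, add_comm]

theorem count_getD_eq_count_true (bs : List Bool) {N : ℕ} (hN : bs.length ≤ N) :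
    Nat.count (bs.getD · false) N = bs.count true := by
  induction bs generalizing N with
  | nil => simp
  | cons b bs ih =>
    obtain _ | N := N
    · simp at hN
    · rw [Nat.count_succ', List.count_cons]
      simp only [List.getD_cons_succ, List.getD_cons_zero, beq_iff_eq]
      rw [ih (Nat.le_of_succ_le_succ hN)]

theorem popcount_packBits_map {α : Type*} (L : List α) (f : α → Bool) {k : ℕ}
    (hk : L.length ≤ 2 ^ k) : popcount k (packBits (L.map f)) = L.countP f := by
  rw [popcount_eq_count_testBit]
  simp only [testBit_packBits]
  rw [count_getD_eq_count_true _ (by rwa [List.length_map]), List.count, List.countP_map]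
  congr 1
  funext a
  simp

end Bits

section PascalRecursion

/-- The entries `0, …, K` of the row indexed by `cs` of a table which, like Pascal's triangle,
computes the entry at `(c :: cs, k)` from those at `(cs, k)` and `(cs, k - 1)`. The row of the empty
list is `a, z, …, z`, and `z` also stands for the missing entry at `(cs, -1)`. -/
def pascalRow {β γ : Type*} (f : γ → β → β → β) (z a : β) (K : ℕ) : List γ → List β
  | [] => a :: List.replicate K z
  | c :: cs => List.zipWith (f c) (pascalRow f z a K cs) (z :: pascalRow f z a K cs)

theorem pascalRow_eq_map_range {β γ : Type*} {f : γ → β → β → β} {z a : β}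
    {g : List γ → ℕ → β} (nil_zero : g [] 0 = a) (nil_succ : ∀ k, g [] (k + 1) = z)
    (cons_zero : ∀ c cs, g (c :: cs) 0 = f c (g cs 0) z)
    (cons_succ : ∀ c cs k, g (c :: cs) (k + 1) = f c (g cs (k + 1)) (g cs k))
    (K : ℕ) (cs : List γ) : pascalRow f z a K cs = (List.range (K + 1)).map (g cs) := by
  induction cs with
  | nil =>
    refine List.ext_getElem (by simp [pascalRow]) fun k _ _ ↦ ?_
    cases k <;> simp [pascalRow, nil_zero, nil_succ]
  | cons c cs ih =>
    refine List.ext_getElem (by simp [pascalRow, ih]) fun k _ _ ↦ ?_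
    cases k <;> simp [pascalRow, ih, cons_zero, cons_succ]

/-- The parities of `∑ i ∈ s, c i`, where `s` runs through the `k`-element sublists of `is`. -/
def subsetParities {ι : Type*} (c : ι → ZMod 2) (is : List ι) (k : ℕ) : List Bool :=
  (is.sublistsLen k).map fun s ↦ decide ((s.map c).sum ≠ 0)

section Parity

variable {ι : Type*} (c : ι → ZMod 2)

theorem subsetParities_cons_succ (i : ι) (is : List ι) (k : ℕ) :
    subsetParities c (i :: is) (k + 1) = subsetParities c is (k + 1) ++
      if c i = 0 then subsetParities c is k else (subsetParities c is k).map not := by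
  have parity_add : ∀ b x : ZMod 2,
      decide (b + x ≠ 0) = if b = 0 then decide (x ≠ 0) else !decide (x ≠ 0) := by
    decide
  simp only [subsetParities, List.sublistsLen_succ_cons, List.map_append, List.map_map,
    Function.comp_def, List.map_cons, List.sum_cons, parity_add]
  split_ifs <;> rfl

/-- One step of the recursion for `subsetParities` on packed words. A word is represented by its
length and its value, since leading zeros matter when words are concatenated or complemented. -/
def parityStep (b : ZMod 2) (p q : ℕ × ℕ) : ℕ × ℕ :=
  (p.1 + q.1, p.2 + (if b = 0 then q.2 else 2 ^ q.1 - 1 - q.2) <<< p.1)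

theorem parityStep_packBits (b : ZMod 2) (bs bs' : List Bool) :
    parityStep b (bs.length, packBits bs) (bs'.length, packBits bs') =
      ((bs ++ if b = 0 then bs' else bs'.map not).length,
        packBits (bs ++ if b = 0 then bs' else bs'.map not)) := by
  rw [parityStep, packBits_append]
  split_ifs <;> simp [packBits_map_not]

theorem pascalRow_parityStep (K : ℕ) (is : List ι) :
    pascalRow (fun i ↦ parityStep (c i)) (0, 0) (1, 0) K is =
      (List.range (K + 1)).map fun k ↦
        ((subsetParities c is k).length, packBits (subsetParities c is k)) := by
  refine pascalRow_eq_map_range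
    (g := fun is k ↦ ((subsetParities c is k).length, packBits (subsetParities c is k)))
    ?_ ?_ ?_ ?_ K is
  · simp [subsetParities, packBits]
  · simp [subsetParities, packBits]
  · simp [subsetParities, packBits, parityStep]
  · intro i is k
    rw [subsetParities_cons_succ, parityStep_packBits]

end Parity

/-- Selects, at each binary digit, the digit of `e'` where `x` has a one and that of `e` where `x`
has a zero. -/
def selectStep (x e e' : ℕ) : ℕ :=
  e ^^^ ((e ^^^ e') &&& x)

theorem pascalRow_selectStep {α κ : Type*} (L : List α) (f : κ → α → Bool) (K : ℕ)
    (js : List κ) :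
    pascalRow (fun j ↦ selectStep (packBits (L.map (f j)))) 0 (2 ^ L.length - 1) K js =
      (List.range (K + 1)).map fun t ↦
        packBits (L.map fun a ↦ decide (js.countP (f · a) = t)) := by
  have select (x e e' : α → Bool) :
      selectStep (packBits (L.map x)) (packBits (L.map e)) (packBits (L.map e')) =
        packBits (L.map fun a ↦ if x a then e' a else e a) := by
    rw [selectStep, ← packBits_map_xor, ← packBits_map_and, ← packBits_map_xor]
    congr 2
    funext a
    cases x a <;> simp
  refine pascalRow_eq_map_range
    (g := fun js t ↦ packBits (L.map fun a ↦ decide (js.countP (f · a) = t))) ?_ ?_ ?_ ?_ K js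
  · simp [packBits_replicate_true]
  · simp [packBits_replicate_false]
  · intro j js
    have select_zero := select (f j) (fun a ↦ decide (js.countP (f · a) = 0)) (fun _ ↦ false)
    rw [List.map_const', packBits_replicate_false] at select_zero
    rw [select_zero]
    congr 2
    funext a
    cases h : f j a <;> simp [h]
  · intro j js t
    rw [select]
    congr 2
    funext a
    cases h : f j a <;> simp [h]

end PascalRecursion

section Enumeration

/-- The entries `0, …, T` of row `w` of the split weight enumerator of the code generated by
`[I | A]`. The outer recursion runs through the columns of `A` and, for all `w`-element sets of rows
in parallel, counts the columns in which the rows have an odd sum. -/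
def splitWeightRow {n m : ℕ} (A : Matrix (Fin n) (Fin m) (ZMod 2)) (w T : ℕ) : List ℕ :=
  -- This is `n.choose w`, whose recursive definition is too slow to be evaluated.
  let N := n.descFactorial w / w.factorial
  let parities (j : Fin m) : ℕ × ℕ :=
    (pascalRow (fun i ↦ parityStep (A i j)) (0, 0) (1, 0) w (List.finRange n)).getD w (0, 0)
  (pascalRow (fun j ↦ selectStep (parities j).2) 0 (2 ^ N - 1) T (List.finRange m)).map
    (popcount (N.log2 + 1))

theorem splitWeightRow_eq {n m : ℕ} (A : Matrix (Fin n) (Fin m) (ZMod 2)) (w T : ℕ) :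
    splitWeightRow A w T = (List.range (T + 1)).map (splitWeightCount A w) := by
  have length_subsets : ((List.finRange n).sublistsLen w).length =
      n.descFactorial w / w.factorial := by
    rw [List.length_sublistsLen, List.length_finRange, Nat.choose_eq_descFactorial_div_factorial]
  have getD_parities (j : Fin m) :
      ((pascalRow (fun i ↦ parityStep (A i j)) (0, 0) (1, 0) w (List.finRange n)).getD w (0, 0)).2 =
        packBits (subsetParities (A · j) (List.finRange n) w) := by
    simp [pascalRow_parityStep (A · j)]
  simp only [splitWeightRow, getD_parities, subsetParities, ← length_subsets,
    pascalRow_selectStep ((List.finRange n).sublistsLen w), List.map_map]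
  refine List.map_congr_left fun t _ ↦ ?_
  rw [splitWeightCount_eq_countP_sublistsLen, Function.comp_apply,
    popcount_packBits_map _ _ Nat.lt_log2_self.le]

/-- The entries `(w, t)` of the split weight enumerator with `w ≤ K` and `w + t ≤ S`. -/
def splitWeightTable {n m : ℕ} (A : Matrix (Fin n) (Fin m) (ZMod 2)) (K S : ℕ) :
    List (List ℕ) :=
  (List.range (K + 1)).map fun w ↦ splitWeightRow A w (S - w)

theorem getD_splitWeightTable {n m : ℕ} (A : Matrix (Fin n) (Fin m) (ZMod 2)) {K S w t : ℕ}
    (hw : w ≤ K) (hs : w + t ≤ S) :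
    ((splitWeightTable A K S).getD w []).getD t 0 = splitWeightCount A w t := by
  have hw' : w < K + 1 := Nat.lt_succ_of_le hw
  have ht : t < S - w + 1 := by omega
  simp [splitWeightTable, splitWeightRow_eq, hw', ht]

/-- The number of codewords of weight `s`, read off from the first rows `L` of the split weight
enumerator of `[I | A]` and the first rows `R` of that of `[I | A⁻¹]`; the entry at `(w, t)` is
taken from `R` when `L` has no row `w`. -/
def lowWeightCount (L R : List (List ℕ)) (s : ℕ) : ℕ :=
  ∑ p ∈ antidiagonal s,
    if p.1 < L.length then (L.getD p.1 []).getD p.2 0 else (R.getD p.2 []).getD p.1 0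

theorem ncard_systematicCode_hammingNorm_eq_lowWeightCount {n : ℕ}
    {A B : Matrix (Fin n) (Fin n) (ZMod 2)} (hAB : A * B = 1) {K K' S s : ℕ}
    (hS : S ≤ K + K' + 1) (hs : s ≤ S) :
    {v | v ∈ systematicCode A ∧ hammingNorm v = s}.ncard =
      lowWeightCount (splitWeightTable A K S) (splitWeightTable B K' S) s := by
  rw [ncard_systematicCode_hammingNorm_eq, lowWeightCount]
  refine sum_congr rfl fun p hp ↦ ?_
  rw [HasAntidiagonal.mem_antidiagonal] at hp
  have length_table : (splitWeightTable A K S).length = K + 1 := by simp [splitWeightTable]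
  rw [length_table]
  split_ifs with hK
  · rw [getD_splitWeightTable A (by omega) (by omega)]
  · rw [getD_splitWeightTable B (by omega) (by omega),
      splitWeightCount_swap_of_mul_eq_one hAB]

end Enumeration

section Length68

/-- The rows of `redundancy`, as numbers whose binary digit `j` is the entry in column `j`. -/
def redundancyRows : List ℕ :=
  [7839578943, 8921684639, 7969057791, 3206846975, 9615434079, 14625197567, 6156810337,
    8647338177, 13255991649, 10599463105, 8383755777, 15414626754, 7248213442, 15104032418,
    13930579874, 5958498818, 13356030660, 3158292836, 1097093572, 7872440932, 7709861636,
    1881251080, 11799449288, 14668853512, 9023515496, 1125136040, 13601974128, 4115332560,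
    10183599888, 9340633872, 1380647344, 5786225888, 10991876736, 674728320]

/-- The redundancy matrix of the self-dual code with parameters `[68, 34, 12]`. -/
def redundancy : Matrix (Fin 34) (Fin 34) (ZMod 2) :=
  .of fun i j ↦ if (redundancyRows.getD i 0).testBit j then 1 else 0

theorem redundancy_mul_transpose : redundancy * redundancyᵀ = 1 := by
  decide +kernel

theorem splitWeightTable_redundancy : splitWeightTable redundancy 7 14 =
    [[1, 0, 0, 0, 0, 0, 0, 0, 0, 0, 0, 0, 0, 0, 0],
      [0, 0, 0, 0, 0, 0, 0, 0, 0, 0, 0, 5, 0, 0],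
      [0, 0, 0, 0, 0, 0, 0, 0, 0, 0, 14, 0, 7],
      [0, 0, 0, 0, 0, 0, 0, 0, 0, 69, 0, 39],
      [0, 0, 0, 0, 0, 0, 0, 0, 147, 0, 306],
      [0, 0, 0, 0, 0, 0, 0, 222, 0, 1061],
      [0, 0, 0, 0, 0, 0, 279, 0, 2199],
      [0, 0, 0, 0, 0, 185, 0, 2986]] := by
  decide +kernel

theorem splitWeightTable_redundancy_transpose : splitWeightTable redundancyᵀ 6 14 =
    [[1, 0, 0, 0, 0, 0, 0, 0, 0, 0, 0, 0, 0, 0, 0],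
      [0, 0, 0, 0, 0, 0, 0, 0, 0, 0, 0, 5, 0, 3],
      [0, 0, 0, 0, 0, 0, 0, 0, 0, 0, 14, 0, 21],
      [0, 0, 0, 0, 0, 0, 0, 0, 0, 30, 0, 223],
      [0, 0, 0, 0, 0, 0, 0, 0, 92, 0, 710],
      [0, 0, 0, 0, 0, 0, 0, 185, 0, 1688],
      [0, 0, 0, 0, 0, 0, 279, 0, 2685]] := by
  decide +kernel

theorem isSelfDual_systematicCode_redundancy : IsSelfDual (systematicCode redundancy) :=
  isSelfDual_systematicCode (redundancy_mul_transpose.trans (CharTwo.neg_eq 1).symm)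

theorem ncard_systematicCode_redundancy_hammingNorm_eq {s : ℕ} (hs : s ≤ 14) :
    {v | v ∈ systematicCode redundancy ∧ hammingNorm v = s}.ncard =
      [1, 0, 0, 0, 0, 0, 0, 0, 0, 0, 0, 0, 1062, 0, 11928].getD s 0 := by
  rw [ncard_systematicCode_hammingNorm_eq_lowWeightCount redundancy_mul_transpose
    (K := 7) (K' := 6) le_rfl hs, splitWeightTable_redundancy,
    splitWeightTable_redundancy_transpose]
  revert s
  decide +kernel

theorem twelve_le_hammingNorm_of_mem_systematicCode_redundancy {v : Fin (34 + 34) → ZMod 2}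
    (hv : v ∈ systematicCode redundancy) (hv0 : v ≠ 0) : 12 ≤ hammingNorm v := by
  refine le_hammingNorm_of_ncard_eq_zero (C := systematicCode redundancy)
    (fun s hpos hs ↦ (ncard_systematicCode_redundancy_hammingNorm_eq (by omega)).trans ?_) hv hv0
  interval_cases s <;> rfl

end Length68

end SystematicCode

open SystematicCode

/-- There exists a binary self-dual `[68, 34, 12]` code with weight enumerator
`W_{68,2}` (γ = 7, β = 155): minimum nonzero weight 12, exactly 1062 codewords of weight 12
and exactly 11928 codewords of weight 14. -/
theorem exists_selfDual_68_16 :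
    ∃ C : Submodule (ZMod 2) (Fin 68 → ZMod 2),
      IsSelfDual C ∧
      (∀ v ∈ C, v ≠ 0 → 12 ≤ hammingNorm v) ∧
      (∃ v ∈ C, hammingNorm v = 12) ∧
      {v | v ∈ C ∧ hammingNorm v = 12}.ncard = 1062 ∧
      {v | v ∈ C ∧ hammingNorm v = 14}.ncard = 11928 := by
  have ncard_twelve := ncard_systematicCode_redundancy_hammingNorm_eq (s := 12) (by norm_num)
  have ncard_fourteen := ncard_systematicCode_redundancy_hammingNorm_eq (s := 14) (by norm_num)
  refine ⟨systematicCode redundancy, isSelfDual_systematicCode_redundancy,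
    fun _ ↦ twelve_le_hammingNorm_of_mem_systematicCode_redundancy, ?_,
    ncard_twelve, ncard_fourteen⟩
  exact Set.nonempty_of_ncard_ne_zero (ncard_twelve.trans_ne (by decide))
end

section
/- There exists a binary self-dual code of length 68 and minimum (nonzero) weight 12 that has exactly 966 codewords of weight 12 and exactly 12376 codewords of weight 14 (i.e. a self-dual [68,34,12] code with weight enumerator W_{68,2} with γ = 6 and β = 131). -/
/-! The code is generated by a matrix `[I | A]` over the field of two elements with `A * Aᵀ = -1`.
Its words of weights 12 and 14 are too many to be enumerated inside the kernel, so they are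
counted through the shadow, the set of all `s` with `wt c ≡ 2 ⟨s, c⟩ (mod 4)` for all words `c`.
This is a coset of the code, and Poisson summation over it gives the Conway–Sloane identity
`∑ⱼ Bⱼ K₂ₘ(j) = 2 ^ 34 (-1) ^ m A₂ₘ` between the weight distributions `A` of the code and `B` of
the shadow, where `K₂ₘ` is a Krawtchouk polynomial. Shadow weights are `2 (mod 4)` and symmetric
under `j ↦ 68 - j`, and for minimum weight 12 suitable integer combinations of these identities
express `A₁₂` and `A₁₄` by `B₂`, `B₆` and `B₁₀` alone. Hence it suffices to count words of weight
at most 10 in the code and in its shadow. By invertibility of `A` such a word is determined by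
either half, and one of its halves has weight at most 5, so a search over sums of at most five
rows of `A` or of `Aᵀ` finds all of them. -/

open Finset Polynomial Matrix

section BinaryVectors

theorem add_add_cancel_left_of_zmodTwo {G : Type*} [AddCommGroup G] [Module (ZMod 2) G] (x y : G) :
    x + (x + y) = y := by
  rw [← add_assoc, ZModModule.add_self, zero_add]

variable {ι : Type*}

theorem mul_self_eq_self (v : ι → ZMod 2) : v * v = v := by
  have hsq : ∀ b : ZMod 2, b * b = b := by decide
  exact funext fun i => hsq (v i)

variable [Fintype ι]

theorem hammingNorm_eq_sum_val (v : ι → ZMod 2) : hammingNorm v = ∑ i, (v i).val := by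
  have hval : ∀ b : ZMod 2, (if b ≠ 0 then 1 else 0) = b.val := by decide
  simp only [hammingNorm, card_filter, hval]

theorem hammingNorm_add_add_two_mul (v w : ι → ZMod 2) :
    hammingNorm (v + w) + 2 * hammingNorm (v * w) = hammingNorm v + hammingNorm w := by
  have hval : ∀ a b : ZMod 2, (a + b).val + 2 * (a * b).val = a.val + b.val := by decide
  simp only [hammingNorm_eq_sum_val, mul_sum, ← sum_add_distrib, Pi.add_apply, Pi.mul_apply, hval]

theorem natCast_hammingNorm_mul (v w : ι → ZMod 2) : (hammingNorm (v * w) : ZMod 2) = v ⬝ᵥ w := by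
  simp only [hammingNorm_eq_sum_val, Nat.cast_sum, ZMod.natCast_zmod_val, dotProduct, Pi.mul_apply]

theorem hammingNorm_mul_modEq_val_dotProduct (v w : ι → ZMod 2) :
    hammingNorm (v * w) ≡ (v ⬝ᵥ w).val [MOD 2] := by
  rw [← ZMod.natCast_eq_natCast_iff, natCast_hammingNorm_mul, ZMod.natCast_zmod_val]

theorem hammingNorm_one_add (v : ι → ZMod 2) :
    hammingNorm (1 + v) + hammingNorm v = Fintype.card ι := by
  have h_one : hammingNorm (1 : ι → ZMod 2) = Fintype.card ι := by
    simp [hammingNorm]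
  have h := hammingNorm_add_add_two_mul 1 v
  rw [one_mul, h_one] at h
  omega

end BinaryVectors

section Duality

variable {ι : Type*} [Fintype ι]

theorem mem_dualCode {R : Type*} [CommRing R] {C : Submodule R (ι → R)} {v : ι → R} :
    v ∈ dualCode C ↔ ∀ c ∈ C, v ⬝ᵥ c = 0 :=
  Iff.rfl

theorem finrank_add_finrank_dualCode {K : Type*} [Field K] (C : Submodule K (ι → K)) :
    Module.finrank K C + Module.finrank K (dualCode C) = Fintype.card ι := by
  have h_dual : LinearMap.BilinForm.orthogonal (dotProductBilin K K) C = dualCode C := by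
    ext v
    rw [LinearMap.BilinForm.mem_orthogonal_iff, mem_dualCode]
    exact forall₂_congr fun c _ => by rw [dotProduct_comm v]; rfl
  have h_ker : LinearMap.ker (dotProductBilin (m := ι) (A := K) K K) = ⊥ :=
    LinearMap.ker_eq_bot'.mpr fun v hv => dotProduct_eq_zero v fun w => LinearMap.congr_fun hv w
  have h := LinearMap.BilinForm.finrank_add_finrank_orthogonal' (B := dotProductBilin K K) C
  rwa [h_dual, h_ker, inf_bot_eq, finrank_bot, add_zero, Module.finrank_fintype_fun_eq_card] at h

theorem IsSelfDual.natCard_sq {C : Submodule (ZMod 2) (ι → ZMod 2)} (hC : IsSelfDual C) :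
    Nat.card C ^ 2 = 2 ^ Fintype.card ι := by
  have hdim := finrank_add_finrank_dualCode C
  rw [← hC] at hdim
  rw [Module.natCard_eq_pow_finrank (K := ZMod 2), Nat.card_zmod, ← pow_mul, mul_two, hdim]

theorem one_mem_dualCode {C : Submodule (ZMod 2) (ι → ZMod 2)} (hC : C ≤ dualCode C) :
    1 ∈ dualCode C := by
  intro c hc
  rw [← mem_dualCode.mp (hC hc) c hc]
  exact sum_congr rfl fun i _ => by rw [← Pi.mul_apply c c, mul_self_eq_self, Pi.one_apply, one_mul]

end Duality

section MacWilliams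

/-- The nontrivial character `b ↦ (-1) ^ b` of `ZMod 2`. -/
def signChar : AddChar (ZMod 2) ℤ := AddChar.zmodChar 2 (neg_one_sq (R := ℤ))

/-- The value at `j` of the `k`-th Krawtchouk polynomial of length `n`, as an explicit alternating
sum of products of binomial coefficients. -/
def krawtchouk (n k j : ℕ) : ℤ :=
  ∑ i ∈ range (k + 1), (-1) ^ i * j.choose i * (n - j).choose (k - i)

theorem krawtchouk_eq_coeff (n k j : ℕ) :
    krawtchouk n k j = ((1 - X : ℤ[X]) ^ j * (1 + X) ^ (n - j)).coeff k := by
  have h_neg : (1 - X : ℤ[X]) ^ j = ((1 + X : ℤ[X]) ^ j).comp (C (-1) * X) := by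
    simp [sub_eq_add_neg]
  rw [coeff_mul, Nat.sum_antidiagonal_eq_sum_range_succ_mk, krawtchouk]
  simp only [h_neg, comp_C_mul_X_coeff, coeff_one_add_X_pow, mul_comm ((-1 : ℤ) ^ _)]

variable {ι : Type*} [Fintype ι]

theorem signChar_dotProduct (u v : ι → ZMod 2) :
    signChar (u ⬝ᵥ v) = ∏ i, signChar (u i * v i) :=
  (map_prod signChar.toMonoidHom (fun i => Multiplicative.ofAdd (u i * v i)) univ :)

variable [DecidableEq ι]

theorem prod_one_sub_X_one_add_X (u : ι → ZMod 2) :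
    (1 - X : ℤ[X]) ^ hammingNorm u * (1 + X) ^ (Fintype.card ι - hammingNorm u) =
      ∑ v : ι → ZMod 2, C (signChar (u ⬝ᵥ v)) * X ^ hammingNorm v := by
  have h_factor : ∀ a : ZMod 2, ∑ b : ZMod 2, C (signChar (a * b)) * (X : ℤ[X]) ^ b.val =
      if a ≠ 0 then 1 - X else 1 + X := by
    have h_sum : ∀ f : ZMod 2 → ℤ[X], ∑ b, f b = f 0 + f 1 := Fin.sum_univ_two
    have h_cases : ∀ a : ZMod 2, a = 0 ∨ a = 1 := by decide
    intro a
    rcases h_cases a with rfl | rfl <;>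
      simp [h_sum, signChar, AddChar.zmodChar_apply, ZMod.val_one, sub_eq_add_neg]
  have h_compl : #{i | ¬u i ≠ 0} = Fintype.card ι - hammingNorm u := by
    rw [filter_not, ← compl_eq_univ_sdiff, card_compl]
    rfl
  calc
    _ = ∏ i, if u i ≠ 0 then (1 - X : ℤ[X]) else 1 + X := by
      rw [prod_ite, prod_const, prod_const, h_compl]
      rfl
    _ = ∏ i, ∑ b : ZMod 2, C (signChar (u i * b)) * (X : ℤ[X]) ^ b.val := by
      simp only [h_factor]
    _ = ∑ v : ι → ZMod 2, ∏ i, C (signChar (u i * v i)) * (X : ℤ[X]) ^ (v i).val := by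
      rw [prod_univ_sum, Fintype.piFinset_univ]
    _ = _ := by
      simp only [prod_mul_distrib, ← map_prod, ← signChar_dotProduct, prod_pow_eq_pow_sum,
        ← hammingNorm_eq_sum_val]

theorem sum_signChar_dotProduct_of_hammingNorm_eq (u : ι → ZMod 2) (k : ℕ) :
    ∑ v : ι → ZMod 2 with hammingNorm v = k, signChar (u ⬝ᵥ v) =
      krawtchouk (Fintype.card ι) k (hammingNorm u) := by
  rw [krawtchouk_eq_coeff, prod_one_sub_X_one_add_X, finsetSum_coeff, sum_filter]
  simp only [coeff_C_mul_X_pow, eq_comm]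

open scoped Classical in
theorem sum_signChar_dotProduct (C : Submodule (ZMod 2) (ι → ZMod 2)) (v : ι → ZMod 2) :
    ∑ c : C, signChar (v ⬝ᵥ c) = if v ∈ dualCode C then (Nat.card C : ℤ) else 0 := by
  let ψ : AddChar C ℤ := signChar.compAddMonoidHom
    ((dotProductBilin (ZMod 2) (ZMod 2) v).comp C.subtype).toAddMonoidHom
  have h_apply : ∀ c : C, ψ c = signChar (v ⬝ᵥ c) := fun c => rfl
  have h_trivial : ψ = 0 ↔ v ∈ dualCode C := by
    have h_sign : ∀ b : ZMod 2, signChar b = 1 ↔ b = 0 := by decide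
    simp only [AddChar.eq_zero_iff, h_apply, h_sign, Subtype.forall, mem_dualCode]
  simp only [← h_apply, AddChar.sum_eq_ite, h_trivial, Nat.card_eq_fintype_card]

open scoped Classical in
theorem sum_krawtchouk_coset (C : Submodule (ZMod 2) (ι → ZMod 2)) (s : ι → ZMod 2) (k : ℕ) :
    ∑ c : C, krawtchouk (Fintype.card ι) k (hammingNorm (s + (c : ι → ZMod 2))) =
      Nat.card C * ∑ v with v ∈ dualCode C ∧ hammingNorm v = k, signChar (s ⬝ᵥ v) := by
  calc
    _ = ∑ v with hammingNorm v = k, ∑ c : C, signChar (s ⬝ᵥ v) * signChar (v ⬝ᵥ c) := by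
      simp only [← sum_signChar_dotProduct_of_hammingNorm_eq, add_dotProduct,
        AddChar.map_add_eq_mul]
      rw [sum_comm]
      simp only [dotProduct_comm]
    _ = ∑ v with hammingNorm v = k,
        if v ∈ dualCode C then signChar (s ⬝ᵥ v) * Nat.card C else 0 := by
      simp only [← mul_sum, sum_signChar_dotProduct, mul_ite, mul_zero]
    _ = _ := by
      rw [← sum_filter, filter_filter, mul_sum]
      simp only [mul_comm, and_comm]

end MacWilliams

section WeightEnumerator

variable {ι : Type*} [Fintype ι]

/-- The number of vectors of Hamming weight `w` in a set of binary vectors: the coefficient of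
`y ^ w` in its weight enumerator. -/
noncomputable def weightCount (S : Set (ι → ZMod 2)) (w : ℕ) : ℕ :=
  {v | v ∈ S ∧ hammingNorm v = w}.ncard

theorem weightCount_eq_zero_iff {S : Set (ι → ZMod 2)} {w : ℕ} :
    weightCount S w = 0 ↔ ∀ v ∈ S, hammingNorm v ≠ w := by
  rw [weightCount, Set.ncard_eq_zero, Set.eq_empty_iff_forall_notMem]
  exact forall_congr' fun v => not_and

theorem weightCount_zero {S : Set (ι → ZMod 2)} (hS : 0 ∈ S) : weightCount S 0 = 1 := by
  rw [weightCount, Set.ncard_eq_one]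
  refine ⟨0, Set.ext fun v => ?_⟩
  simp only [hammingNorm_eq_zero, Set.mem_ofPred_eq, Set.mem_singleton_iff, and_iff_right_iff_imp]
  rintro rfl
  exact hS

theorem weightCount_card_sub {S : Set (ι → ZMod 2)} (hS : ∀ v ∈ S, 1 + v ∈ S) {w : ℕ}
    (hw : w ≤ Fintype.card ι) : weightCount S (Fintype.card ι - w) = weightCount S w := by
  refine Set.ncard_congr (fun v _ => 1 + v) ?_ (fun v v' _ _ h => add_left_cancel h) ?_
  · rintro v ⟨hv, hvw⟩
    exact ⟨hS v hv, by have := hammingNorm_one_add v; omega⟩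
  · rintro v ⟨hv, hvw⟩
    exact ⟨1 + v, ⟨hS v hv, by have := hammingNorm_one_add v; omega⟩,
      add_add_cancel_left_of_zmodTwo 1 v⟩

variable [DecidableEq ι]

theorem weightCount_eq_card_filter (S : Set (ι → ZMod 2)) [DecidablePred (· ∈ S)] (w : ℕ) :
    weightCount S w = #{v | v ∈ S ∧ hammingNorm v = w} := by
  rw [weightCount, ← Set.ncard_coe_finset, coe_filter_univ]

theorem sum_weightCount_mul (S : Set (ι → ZMod 2)) [DecidablePred (· ∈ S)] (f : ℕ → ℤ) :
    ∑ j ∈ range (Fintype.card ι + 1), weightCount S j * f j =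
      ∑ v with v ∈ S, f (hammingNorm v) := by
  have h_range : ∀ v ∈ ({v | v ∈ S} : Finset (ι → ZMod 2)),
      hammingNorm v ∈ range (Fintype.card ι + 1) :=
    fun v _ => mem_range_succ_iff.mpr hammingNorm_le_card_fintype
  rw [← sum_fiberwise_of_maps_to h_range]
  refine sum_congr rfl fun j _ => ?_
  rw [sum_congr rfl fun v hv => congrArg f (mem_filter.mp hv).2, sum_const, filter_filter,
    nsmul_eq_mul, weightCount_eq_card_filter]

end WeightEnumerator

section Shadow

variable {ι : Type*} [Fintype ι] {C : Submodule (ZMod 2) (ι → ZMod 2)} {s v : ι → ZMod 2}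

/-- The shadow of a binary code `C`, i.e. the vectors `s` such that `wt c ≡ 2 ⟨s, c⟩ (mod 4)` for
all `c ∈ C`. For a self-dual `C` with doubly-even subcode `C₀` it is `C₀ᗮ \ C` if `C₀ ≠ C` and `C`
otherwise. -/
def codeShadow (C : Submodule (ZMod 2) (ι → ZMod 2)) : Set (ι → ZMod 2) :=
  {s | ∀ c ∈ C, hammingNorm c ≡ 2 * (s ⬝ᵥ c).val [MOD 4]}

theorem even_hammingNorm_of_le_dualCode (hC : C ≤ dualCode C) (hv : v ∈ C) :
    Even (hammingNorm v) := by
  rw [← ZMod.natCast_eq_zero_iff_even, ← mul_self_eq_self v, natCast_hammingNorm_mul]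
  exact mem_dualCode.mp (hC hv) v hv

theorem mem_codeShadow_iff_add_mem_dualCode (hs : s ∈ codeShadow C) :
    v ∈ codeShadow C ↔ s + v ∈ dualCode C := by
  have h_eq : ∀ c ∈ C, (hammingNorm c ≡ 2 * (v ⬝ᵥ c).val [MOD 4] ↔ (s + v) ⬝ᵥ c = 0) := by
    intro c hc
    have hs_c := hs c hc
    have h_val : ∀ a b : ZMod 2, a + b = 0 ↔ a.val = b.val := by decide
    have h_lt : ∀ a : ZMod 2, a.val < 2 := ZMod.val_lt
    have := h_lt (s ⬝ᵥ c)
    have := h_lt (v ⬝ᵥ c)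
    rw [add_dotProduct, h_val]
    simp only [Nat.ModEq] at hs_c ⊢
    omega
  exact forall₂_congr h_eq

theorem hammingNorm_modEq_of_mem_codeShadow (hC : dualCode C ≤ C) (hs : s ∈ codeShadow C)
    (hv : v ∈ codeShadow C) : hammingNorm v ≡ hammingNorm s [MOD 4] := by
  have h_mem : s + v ∈ C := hC ((mem_codeShadow_iff_add_mem_dualCode hs).mp hv)
  have h_weight := hammingNorm_add_add_two_mul s (s + v)
  have h_inner := hammingNorm_mul_modEq_val_dotProduct s (s + v)
  have h_shadow := hs _ h_mem
  rw [add_add_cancel_left_of_zmodTwo] at h_weight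
  simp only [Nat.ModEq] at h_inner h_shadow ⊢
  omega

theorem one_add_mem_codeShadow (hC : C ≤ dualCode C) (hv : v ∈ codeShadow C) :
    1 + v ∈ codeShadow C := by
  rw [mem_codeShadow_iff_add_mem_dualCode hv, add_left_comm, ZModModule.add_self, add_zero]
  exact one_mem_dualCode hC

theorem signChar_dotProduct_of_mem_codeShadow (hs : s ∈ codeShadow C) (hv : v ∈ C) {m : ℕ}
    (hm : hammingNorm v = 2 * m) : signChar (s ⬝ᵥ v) = (-1) ^ m := by
  have h := hs v hv
  rw [hm, Nat.ModEq] at h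
  rw [signChar, AddChar.zmodChar_apply, neg_one_pow_eq_pow_mod_two,
    neg_one_pow_eq_pow_mod_two m]
  congr 1
  omega

open scoped Classical in
theorem sum_filter_mem_codeShadow [DecidableEq ι] (hC : IsSelfDual C) (hs : s ∈ codeShadow C)
    (f : ℕ → ℤ) :
    ∑ v with v ∈ codeShadow C, f (hammingNorm v) =
      ∑ c : C, f (hammingNorm (s + (c : ι → ZMod 2))) := by
  symm
  refine sum_bij (fun c _ => s + c) (fun c _ => ?_) (fun c _ d _ h => ?_) (fun v hv => ?_)
    fun c _ => rfl
  · rw [mem_filter_univ, mem_codeShadow_iff_add_mem_dualCode hs,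
      add_add_cancel_left_of_zmodTwo, ← hC]
    exact c.2
  · exact Subtype.ext (add_left_cancel h)
  · rw [mem_filter_univ, mem_codeShadow_iff_add_mem_dualCode hs, ← hC] at hv
    exact ⟨⟨s + v, hv⟩, mem_univ _, add_add_cancel_left_of_zmodTwo s v⟩

theorem sum_weightCount_codeShadow_mul_krawtchouk (hC : IsSelfDual C)
    (hs : s ∈ codeShadow C) (m : ℕ) :
    ∑ j ∈ range (Fintype.card ι + 1),
        weightCount (codeShadow C) j * krawtchouk (Fintype.card ι) (2 * m) j =
      Nat.card C * ((-1) ^ m * weightCount (C : Set (ι → ZMod 2)) (2 * m)) := by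
  classical
  rw [sum_weightCount_mul, sum_filter_mem_codeShadow hC hs, sum_krawtchouk_coset, ← hC,
    weightCount_eq_card_filter]
  have h_sign : ∀ v ∈ ({v | v ∈ C ∧ hammingNorm v = 2 * m} : Finset (ι → ZMod 2)),
      signChar (s ⬝ᵥ v) = (-1) ^ m := fun v hv =>
    signChar_dotProduct_of_mem_codeShadow hs (mem_filter.mp hv).2.1 (mem_filter.mp hv).2.2
  rw [sum_congr rfl h_sign, sum_const, nsmul_eq_mul, mul_comm ((-1 : ℤ) ^ m)]
  rfl

end Shadow

section LengthSixtyEight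

theorem sum_range_four_mul_add_one {M : Type*} [AddCommMonoid M] {f : ℕ → M}
    (hf : ∀ j, j % 4 ≠ 2 → f j = 0) (h : ℕ) :
    ∑ j ∈ range (4 * h + 1), f j = ∑ i ∈ range h, f (4 * i + 2) := by
  induction h with
  | zero => simp [hf 0]
  | succ h ih =>
    rw [show 4 * (h + 1) + 1 = 4 * h + 1 + 1 + 1 + 1 + 1 by ring, sum_range_succ, sum_range_succ,
      sum_range_succ, sum_range_succ, ih, sum_range_succ, hf (4 * h + 1) (by omega),
      hf (4 * h + 1 + 1 + 1) (by omega), hf (4 * h + 1 + 1 + 1 + 1) (by omega)]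
    simp only [add_zero]

variable {ι : Type*} [Fintype ι] {C : Submodule (ZMod 2) (ι → ZMod 2)} {s : ι → ZMod 2}

theorem natCast_natCard_of_card_eq_sixtyEight (hι : Fintype.card ι = 68) (hC : IsSelfDual C) :
    (Nat.card C : ℤ) = 2 ^ 34 := by
  have h_sq := hC.natCard_sq
  rw [hι, show 68 = 34 * 2 by norm_num, pow_mul] at h_sq
  exact_mod_cast Nat.pow_left_injective two_ne_zero h_sq

theorem weightCount_codeShadow_eq_zero (hC : IsSelfDual C) (hs : s ∈ codeShadow C)
    {j : ℕ} (hj : ¬j ≡ hammingNorm s [MOD 4]) : weightCount (codeShadow C) j = 0 :=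
  weightCount_eq_zero_iff.mpr fun _ hv hvj =>
    hj (hvj ▸ hammingNorm_modEq_of_mem_codeShadow hC.ge hs hv)

theorem weightCount_codeShadow_sub (hι : Fintype.card ι = 68) (hC : IsSelfDual C) {w : ℕ}
    (hw : w ≤ 68) : weightCount (codeShadow C) (68 - w) = weightCount (codeShadow C) w := by
  rw [← hι] at hw ⊢
  exact weightCount_card_sub (fun v => one_add_mem_codeShadow hC.le) hw

theorem sum_mul_weightCount_eq_of_sum_mul_krawtchouk (hι : Fintype.card ι = 68)
    (hC : IsSelfDual C) (hs : s ∈ codeShadow C) (hs_weight : hammingNorm s ≡ 2 [MOD 4])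
    {r : ℕ} {a : Fin r → ℤ} {b : Fin 17 → ℤ}
    (h : ∀ i : Fin 17, ∑ m, a m * krawtchouk 68 (2 * m) (4 * i + 2) = 2 ^ 34 * b i) :
    ∑ m, a m * ((-1) ^ (m : ℕ) * weightCount (C : Set (ι → ZMod 2)) (2 * m)) =
      ∑ i : Fin 17, weightCount (codeShadow C) (4 * i + 2) * b i := by
  have h_weights : ∀ j, j % 4 ≠ 2 → ∀ x : ℤ, (weightCount (codeShadow C) j : ℤ) * x = 0 := by
    intro j hj x
    rw [weightCount_codeShadow_eq_zero hC hs fun h => hj (h.trans hs_weight), Nat.cast_zero,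
      zero_mul]
  have h_macWilliams := sum_weightCount_codeShadow_mul_krawtchouk hC hs
  simp only [hι, natCast_natCard_of_card_eq_sixtyEight hι hC] at h_macWilliams
  refine mul_left_cancel₀ (pow_ne_zero 34 (two_ne_zero (α := ℤ))) ?_
  calc
    _ = ∑ m, a m * ∑ j ∈ range (4 * 17 + 1),
        weightCount (codeShadow C) j * krawtchouk 68 (2 * m) j := by
      simp only [Nat.reduceMul, Nat.reduceAdd, h_macWilliams, mul_sum, mul_left_comm]
    _ = ∑ m, a m * ∑ i : Fin 17,
        weightCount (codeShadow C) (4 * i + 2) * krawtchouk 68 (2 * m) (4 * i + 2) := by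
      simp only [sum_range_four_mul_add_one fun j hj => h_weights j hj _, sum_range]
    _ = ∑ i : Fin 17, weightCount (codeShadow C) (4 * i + 2) *
        ∑ m, a m * krawtchouk 68 (2 * m) (4 * i + 2) := by
      simp only [mul_sum]
      rw [sum_comm]
      simp only [mul_left_comm]
    _ = _ := by
      simp only [h, mul_sum, mul_left_comm]

theorem weightCount_twelve_and_fourteen (hι : Fintype.card ι = 68)
    (hC : IsSelfDual C) (hs : s ∈ codeShadow C) (hs_weight : hammingNorm s ≡ 2 [MOD 4])
    (h_min : ∀ v ∈ C, v ≠ 0 → 12 ≤ hammingNorm v) (h_two : weightCount (codeShadow C) 2 = 0)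
    {β γ : ℤ} (h_six : weightCount (codeShadow C) 6 = γ)
    (h_ten : weightCount (codeShadow C) 10 = β - 14 * γ) :
    (weightCount (C : Set (ι → ZMod 2)) 12 : ℤ) = 442 + 4 * β ∧
      (weightCount (C : Set (ι → ZMod 2)) 14 : ℤ) = 14960 - 8 * β - 256 * γ := by
  have h_zero : weightCount (C : Set (ι → ZMod 2)) 0 = 1 := weightCount_zero C.zero_mem
  have h_low : ∀ w, 0 < w → w < 12 → weightCount (C : Set (ι → ZMod 2)) w = 0 := by
    intro w hw₀ hw₁₂
    refine weightCount_eq_zero_iff.mpr fun v hv hvw => ?_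
    have := h_min v hv (hammingNorm_ne_zero_iff.mp (by omega))
    omega
  have h_symm {w : ℕ} := weightCount_codeShadow_sub (w := w) hι hC
  have h_fiftyEight : weightCount (codeShadow C) 58 = β - 14 * γ := by
    rw [← h_ten, ← h_symm (by norm_num)]
  have h_sixtyTwo : weightCount (codeShadow C) 62 = γ := by
    rw [← h_six, ← h_symm (by norm_num)]
  have h_sixtySix : weightCount (codeShadow C) 66 = 0 := by
    rw [← h_two, ← h_symm (by norm_num)]
  -- The coefficients `a` are chosen so that the right-hand sides `b` vanish except at the weights
  -- 2, 6, 10, 58, 62 and 66, at which the shadow is known.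
  have h_twelve := sum_mul_weightCount_eq_of_sum_mul_krawtchouk hι hC hs hs_weight
    (a := ![-442, 416, -38, 56, 3, 4, 1])
    (b := ![208, 28, 2, 0, 0, 0, 0, 0, 0, 0, 0, 0, 0, 0, 2, 28, 208]) (by decide +kernel)
  have h_fourteen := sum_mul_weightCount_eq_of_sum_mul_krawtchouk hι hC hs hs_weight
    (a := ![14960, -4576, 1552, -291, 80, 4, 0, 1])
    (b := ![2464, 184, 4, 0, 0, 0, 0, 0, 0, 0, 0, 0, 0, 0, 4, 184, 2464]) (by decide +kernel)
  norm_num [Fin.sum_univ_succ, h_zero, h_low, h_two, h_six, h_ten, h_fiftyEight, h_sixtyTwo,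
    h_sixtySix] at h_twelve h_fourteen
  constructor <;> linarith

end LengthSixtyEight

section SystematicCode

variable {R : Type*} [CommRing R] {m n : ℕ}

theorem append_add_append (x x' : Fin m → R) (y y' : Fin n → R) :
    Fin.append x y + Fin.append x' y' = Fin.append (x + x') (y + y') := by
  ext i
  refine Fin.addCases (fun i => ?_) (fun i => ?_) i <;>
    simp only [Pi.add_apply, Fin.append_left, Fin.append_right]

theorem append_dotProduct_append (x x' : Fin m → R) (y y' : Fin n → R) :
    Fin.append x y ⬝ᵥ Fin.append x' y' = x ⬝ᵥ x' + y ⬝ᵥ y' := by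
  simp only [dotProduct, Fin.sum_univ_add, Fin.append_left, Fin.append_right]

theorem hammingNorm_append (x : Fin m → ZMod 2) (y : Fin n → ZMod 2) :
    hammingNorm (Fin.append x y) = hammingNorm x + hammingNorm y := by
  simp only [hammingNorm_eq_sum_val, Fin.sum_univ_add, Fin.append_left, Fin.append_right]

/-- The matrix `[I | A]`. -/
def systematicMatrix (A : Matrix (Fin m) (Fin n) R) : Matrix (Fin m) (Fin (m + n)) R :=
  of fun i => Fin.append (Pi.single i 1) (A i)

/-- The code generated by the rows of `[I | A]`. -/
def systematicCode (A : Matrix (Fin m) (Fin n) R) : Submodule R (Fin (m + n) → R) :=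
  Submodule.span R (Set.range (systematicMatrix A).row)

theorem vecMul_systematicMatrix (A : Matrix (Fin m) (Fin n) R) (x : Fin m → R) :
    x ᵥ* systematicMatrix A = Fin.append x (x ᵥ* A) := by
  ext j
  refine Fin.addCases (fun j => ?_) (fun j => ?_) j
  · simp [vecMul, dotProduct, systematicMatrix, Pi.single_apply]
  · simp [vecMul, dotProduct, systematicMatrix]

theorem mem_systematicCode {A : Matrix (Fin m) (Fin n) R} {v : Fin (m + n) → R} :
    v ∈ systematicCode A ↔ ∃ x, Fin.append x (x ᵥ* A) = v := by
  simp only [systematicCode, ← range_vecMulLinear, LinearMap.mem_range, vecMulLinear_apply,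
    vecMul_systematicMatrix]

theorem append_mem_systematicCode {A : Matrix (Fin m) (Fin n) R} {x : Fin m → R}
    {y : Fin n → R} : Fin.append x y ∈ systematicCode A ↔ x ᵥ* A = y := by
  rw [mem_systematicCode]
  refine ⟨?_, fun h => ⟨x, by rw [h]⟩⟩
  rintro ⟨u, hu⟩
  obtain ⟨rfl, rfl⟩ := Prod.ext_iff.mp <|
    (Fin.appendEquiv m n).injective (a₁ := (u, u ᵥ* A)) (a₂ := (x, y)) hu
  rfl

theorem append_mem_dualCode_systematicCode {A : Matrix (Fin m) (Fin n) R} {x : Fin m → R}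
    {y : Fin n → R} : Fin.append x y ∈ dualCode (systematicCode A) ↔ x + A *ᵥ y = 0 := by
  have h_dot : ∀ u : Fin m → R, Fin.append x y ⬝ᵥ Fin.append u (u ᵥ* A) = (x + A *ᵥ y) ⬝ᵥ u := by
    intro u
    rw [append_dotProduct_append, add_dotProduct, dotProduct_comm y, ← dotProduct_mulVec,
      dotProduct_comm u]
  simp only [mem_dualCode, mem_systematicCode, forall_exists_index, forall_apply_eq_imp_iff, h_dot]
  exact ⟨dotProduct_eq_zero _, fun h u => by rw [h, zero_dotProduct]⟩

theorem vecMul_eq_iff_add_mulVec_eq_zero {A : Matrix (Fin n) (Fin n) R} (hA : A * Aᵀ = -1)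
    {x y : Fin n → R} : x ᵥ* A = y ↔ x + A *ᵥ y = 0 := by
  have hA' : Aᵀ * A = -1 := by
    rw [← neg_eq_iff_eq_neg, ← Matrix.mul_neg, mul_eq_one_comm, Matrix.neg_mul, hA, neg_neg]
  constructor
  · rintro rfl
    rw [← vecMul_transpose, vecMul_vecMul, hA, vecMul_neg, vecMul_one, add_neg_cancel]
  · intro h
    rw [eq_neg_of_add_eq_zero_left h, ← vecMul_transpose, neg_vecMul, vecMul_vecMul, hA',
      vecMul_neg, vecMul_one, neg_neg]

theorem isSelfDual_systematicCode {A : Matrix (Fin n) (Fin n) R} (hA : A * Aᵀ = -1) :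
    IsSelfDual (systematicCode A) := by
  ext v
  obtain ⟨⟨x, y⟩, rfl⟩ := (Fin.appendEquiv n n).surjective v
  exact append_mem_systematicCode.trans <| (vecMul_eq_iff_add_mulVec_eq_zero hA).trans
    append_mem_dualCode_systematicCode.symm

end SystematicCode

section ShadowOfSpan

variable {ι : Type*} [Fintype ι] {S : Set (ι → ZMod 2)} {s : ι → ZMod 2}

theorem mem_codeShadow_span
    (h_self : Submodule.span (ZMod 2) S ≤ dualCode (Submodule.span (ZMod 2) S))
    (h : ∀ c ∈ S, hammingNorm c ≡ 2 * (s ⬝ᵥ c).val [MOD 4]) :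
    s ∈ codeShadow (Submodule.span (ZMod 2) S) := by
  intro c hc
  induction hc using Submodule.span_induction with
  | mem c hc => exact h c hc
  | zero => simp [Nat.ModEq]
  | add c d hc hd ihc ihd =>
    have h_weight := hammingNorm_add_add_two_mul c d
    have h_inner := hammingNorm_mul_modEq_val_dotProduct c d
    rw [mem_dualCode.mp (h_self hc) d hd, ZMod.val_zero] at h_inner
    have h_val : (s ⬝ᵥ (c + d)).val ≡ (s ⬝ᵥ c).val + (s ⬝ᵥ d).val [MOD 2] := by
      rw [← ZMod.natCast_eq_natCast_iff]
      simp only [Nat.cast_add, ZMod.natCast_zmod_val, dotProduct_add]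
    simp only [Nat.ModEq] at h_inner h_val ihc ihd ⊢
    omega
  | smul a c _ ihc =>
    have h_cases : ∀ a : ZMod 2, a = 0 ∨ a = 1 := by decide
    rcases h_cases a with rfl | rfl
    · simp [Nat.ModEq]
    · rwa [one_smul]

end ShadowOfSpan

section SplitCount

theorem card_filter_add_eq_and_lt {α : Type*} [Fintype α] (a b : α → ℕ) {r w : ℕ}
    (hr : r ≤ w + 1) : #{x | a x + b x = w ∧ a x < r} =
      ∑ k ∈ range r, #{x | a x = k ∧ b x = w - k} := by
  have h_maps : ∀ x ∈ ({x | a x + b x = w ∧ a x < r} : Finset α), a x ∈ range r :=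
    fun x hx => mem_range.mpr (mem_filter.mp hx).2.2
  rw [card_eq_sum_card_fiberwise h_maps]
  refine sum_congr rfl fun k hk => congrArg card (Finset.ext fun x => ?_)
  have := mem_range.mp hk
  simp only [mem_filter, mem_univ, true_and]
  omega

section Graph

variable {p q : ℕ} {S : Set (Fin (p + q) → ZMod 2)}
  {f : (Fin p → ZMod 2) → Fin q → ZMod 2} {g : (Fin q → ZMod 2) → Fin p → ZMod 2}

theorem weightCount_eq_card_of_append_mem_iff (hf : ∀ x y, Fin.append x y ∈ S ↔ f x = y) (w : ℕ) :
    weightCount S w = #{x | hammingNorm x + hammingNorm (f x) = w} := by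
  rw [weightCount, ← Set.ncard_coe_finset]
  symm
  refine Set.ncard_congr (fun x _ => Fin.append x (f x)) ?_ ?_ ?_
  · intro x hx
    rw [mem_coe, mem_filter_univ] at hx
    exact ⟨(hf x _).mpr rfl, (hammingNorm_append x _).trans hx⟩
  · intro x x' _ _ h
    exact congrArg Prod.fst <|
      (Fin.appendEquiv p q).injective (a₁ := (x, f x)) (a₂ := (x', f x')) h
  · rintro v ⟨hv, hvw⟩
    obtain ⟨⟨x, y⟩, rfl⟩ := (Fin.appendEquiv p q).surjective v
    obtain rfl := (hf x y).mp hv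
    refine ⟨x, ?_, rfl⟩
    rw [mem_coe, mem_filter_univ, ← hammingNorm_append]
    exact hvw

theorem weightCount_two_mul_of_append_mem_iff (hf : ∀ x y, Fin.append x y ∈ S ↔ f x = y)
    (hg : ∀ x y, Fin.append x y ∈ S ↔ g y = x) (m : ℕ) : weightCount S (2 * m) =
      ∑ k ∈ range (m + 1), #{x | hammingNorm x = k ∧ hammingNorm (f x) = 2 * m - k} +
      ∑ k ∈ range m, #{y | hammingNorm y = k ∧ hammingNorm (g y) = 2 * m - k} := by
  have hgf : ∀ x, g (f x) = x := fun x => (hg x (f x)).mp ((hf x _).mpr rfl)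
  have hfg : ∀ y, f (g y) = y := fun y => (hf (g y) y).mp ((hg _ y).mpr rfl)
  have h_right : #{x | hammingNorm x + hammingNorm (f x) = 2 * m ∧ ¬hammingNorm x < m + 1} =
      #{y | hammingNorm y + hammingNorm (g y) = 2 * m ∧ hammingNorm y < m} := by
    refine card_nbij' f g ?_ ?_ (fun x _ => hgf x) (fun y _ => hfg y)
    · intro x
      simp only [coe_filter_univ, Set.mem_ofPred_eq, hgf]
      omega
    · intro y
      simp only [coe_filter_univ, Set.mem_ofPred_eq, hfg]
      omega
  rw [weightCount_eq_card_of_append_mem_iff hf,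
    ← card_filter_add_card_filter_not (fun x => hammingNorm x < m + 1), filter_filter,
    filter_filter, h_right, card_filter_add_eq_and_lt _ _ (by omega),
    card_filter_add_eq_and_lt _ _ (by omega)]

end Graph

theorem hammingNorm_cons {p : ℕ} (b : ZMod 2) (x : Fin p → ZMod 2) :
    hammingNorm (Fin.cons b x : Fin (p + 1) → ZMod 2) = b.val + hammingNorm x := by
  simp only [hammingNorm_eq_sum_val, Fin.sum_univ_succ, Fin.cons_zero, Fin.cons_succ]

/-- The number of vectors `x` of weight `k` such that `t + x ᵥ* A` has weight `w`. -/
def splitCount {p q : ℕ} (A : Matrix (Fin p) (Fin q) (ZMod 2)) (t : Fin q → ZMod 2)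
    (k w : ℕ) : ℕ :=
  #{x | hammingNorm x = k ∧ hammingNorm (t + x ᵥ* A) = w}

variable {p q : ℕ}

theorem splitCount_zero (A : Matrix (Fin p) (Fin q) (ZMod 2)) (t : Fin q → ZMod 2) (w : ℕ) :
    splitCount A t 0 w = if hammingNorm t = w then 1 else 0 := by
  simp only [splitCount, hammingNorm_eq_zero, ← filter_filter, filter_eq', mem_univ, if_true,
    filter_singleton, zero_vecMul, add_zero]
  split_ifs <;> rfl

theorem splitCount_eq_zero_of_lt {k : ℕ} (hk : p < k) (A : Matrix (Fin p) (Fin q) (ZMod 2))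
    (t : Fin q → ZMod 2) (w : ℕ) : splitCount A t k w = 0 := by
  refine card_eq_zero.mpr (filter_false_of_mem fun x _ h => ?_)
  exact hk.not_ge <| h.1 ▸ hammingNorm_le_card_fintype.trans_eq (Fintype.card_fin p)

theorem splitCount_succ (A : Matrix (Fin (p + 1)) (Fin q) (ZMod 2)) (t : Fin q → ZMod 2)
    (k w : ℕ) : splitCount A t (k + 1) w =
      splitCount (A.submatrix Fin.succ id) (t + A.row 0) k w +
        splitCount (A.submatrix Fin.succ id) t (k + 1) w := by
  have h_sum : ∀ f : ZMod 2 → ℕ, ∑ b, f b = f 1 + f 0 := fun f =>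
    (Fin.sum_univ_two f).trans (add_comm _ _)
  have h_cons : ∀ (b : ZMod 2) (x : Fin p → ZMod 2),
      (Fin.cons b x : Fin (p + 1) → ZMod 2) ᵥ* A = b • A.row 0 + x ᵥ* A.submatrix Fin.succ id := by
    intro b x
    ext j
    simp only [vecMul, dotProduct, Fin.sum_univ_succ, Fin.cons_zero, Fin.cons_succ, Pi.add_apply,
      Pi.smul_apply, smul_eq_mul, submatrix_apply, id_eq, row_apply]
  have h_equiv : ∀ (b : ZMod 2) (x : Fin p → ZMod 2),
      Fin.consEquiv (fun _ : Fin (p + 1) => ZMod 2) (b, x) = Fin.cons b x := fun _ _ => rfl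
  simp only [splitCount, card_filter]
  rw [← (Fin.consEquiv fun _ : Fin (p + 1) => ZMod 2).sum_comp, Fintype.sum_prod_type, h_sum]
  simp only [h_equiv, hammingNorm_cons, h_cons, one_smul, zero_smul, zero_add, add_assoc,
    ZMod.val_one, ZMod.val_zero, add_comm 1, Nat.add_right_cancel_iff]

end SplitCount

section XorEncoding

/-- A binary vector as the natural number whose base-`64` digits are its coordinates. As
`64 ≡ 1 (mod 63)`, it is congruent to the Hamming weight mod `63`, while addition becomes `^^^`. -/
def encode {q : ℕ} (v : Fin q → ZMod 2) : ℕ :=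
  Nat.ofDigits 64 (List.ofFn fun i => (v i).val)

variable {p q : ℕ}

theorem encode_succ (v : Fin (q + 1) → ZMod 2) :
    encode v = (v 0).val + 64 * encode fun i : Fin q => v i.succ := by
  rw [encode, List.ofFn_succ, Nat.ofDigits_cons, encode]

theorem val_add_mul_xor_val_add_mul (b c : ZMod 2) (m n : ℕ) :
    (b.val + 64 * m) ^^^ (c.val + 64 * n) = (b + c).val + 64 * (m ^^^ n) := by
  have h_lt : ∀ d : ZMod 2, d.val < 2 ^ 6 := by decide
  have h_xor : ∀ b c : ZMod 2, b.val ^^^ c.val = (b + c).val := by decide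
  refine Nat.eq_of_testBit_eq fun i => ?_
  simp only [add_comm, show 64 = 2 ^ 6 by norm_num, Nat.testBit_xor,
    Nat.testBit_two_pow_mul_add _ (h_lt _)]
  split_ifs
  · rw [← Nat.testBit_xor, h_xor, add_comm]
  · rfl

theorem encode_add (v w : Fin q → ZMod 2) : encode (v + w) = encode v ^^^ encode w := by
  induction q with
  | zero => simp [encode]
  | succ q ih =>
    rw [encode_succ v, encode_succ w, val_add_mul_xor_val_add_mul, ← ih, encode_succ]
    rfl

theorem encode_mod (hq : q < 63) (v : Fin q → ZMod 2) : encode v % 63 = hammingNorm v := by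
  have h_modEq : encode v ≡ hammingNorm v [MOD 63] := by
    have h := Nat.ofDigits_modEq' 64 1 63 rfl (List.ofFn fun i => (v i).val)
    rwa [Nat.ofDigits_one, List.sum_ofFn, ← hammingNorm_eq_sum_val] at h
  have h_le : hammingNorm v ≤ q := hammingNorm_le_card_fintype.trans_eq (Fintype.card_fin q)
  rw [h_modEq, Nat.mod_eq_of_lt (h_le.trans_lt hq)]

/-- The number of ways of choosing `k` entries of a list such that the `^^^` of `a` and the chosen
entries is `w` modulo `63`. Only recursors and `Nat` functions that the kernel evaluates natively
occur, as the kernel has to run this on nearly a million selections. -/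
def xorCount (w : ℕ) : ℕ → List ℕ → ℕ → ℕ
  | 0 => fun _ a => ((a.mod 63).beq w).rec 0 1
  | k + 1 => fun l a => l.rec 0 fun r l s => (xorCount w k l (a.xor r)).add s

theorem xorCount_zero (w : ℕ) (l : List ℕ) (a : ℕ) :
    xorCount w 0 l a = if a % 63 = w then 1 else 0 := by
  split_ifs with h
  · rw [← Nat.beq_eq] at h
    exact congrArg (Bool.rec 0 1) h
  · rw [← Nat.beq_eq, Bool.not_eq_true] at h
    exact congrArg (Bool.rec 0 1) h

theorem xorCount_succ_nil (w k a : ℕ) : xorCount w (k + 1) [] a = 0 :=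
  rfl

theorem xorCount_succ_cons (w k r : ℕ) (l : List ℕ) (a : ℕ) :
    xorCount w (k + 1) (r :: l) a = xorCount w k l (a ^^^ r) + xorCount w (k + 1) l a :=
  rfl

theorem xorCount_ofFn_encode (hq : q < 63) (A : Matrix (Fin p) (Fin q) (ZMod 2))
    (t : Fin q → ZMod 2) (k w : ℕ) :
    xorCount w k (List.ofFn fun i => encode (A.row i)) (encode t) = splitCount A t k w := by
  induction p generalizing t k with
  | zero =>
    cases k with
    | zero => rw [splitCount_zero, xorCount_zero, encode_mod hq]
    | succ k => rw [splitCount_eq_zero_of_lt k.succ_pos, List.ofFn_zero, xorCount_succ_nil]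
  | succ p ih =>
    cases k with
    | zero => rw [splitCount_zero, xorCount_zero, encode_mod hq]
    | succ k =>
      rw [splitCount_succ, ← ih, ← ih, encode_add, List.ofFn_succ, xorCount_succ_cons]
      rfl

end XorEncoding

section CosetSearch

variable {n : ℕ} {A : Matrix (Fin n) (Fin n) (ZMod 2)} {t : Fin n → ZMod 2}

/-- The number of vectors of weight `2 * m` in the coset of `systematicCode A` through
`Fin.append t 0` for `A * Aᵀ = -1`, by a search over the left halves of weight at most `m` and the
right halves of weight less than `m`. -/
def cosetSearchCount (A : Matrix (Fin n) (Fin n) (ZMod 2)) (t : Fin n → ZMod 2) (m : ℕ) : ℕ :=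
  ∑ k ∈ range (m + 1),
      xorCount (2 * m - k) k (List.ofFn fun i => encode (A.row i)) (encode (t ᵥ* A)) +
    ∑ k ∈ range m, xorCount (2 * m - k) k (List.ofFn fun i => encode (A.col i)) (encode t)

theorem weightCount_coset_systematicCode (hA : A * Aᵀ = -1) (hn : n < 63) (m : ℕ) :
    weightCount {v | Fin.append t 0 + v ∈ systematicCode A} (2 * m) = cosetSearchCount A t m := by
  have h_left : ∀ x y, Fin.append x y ∈ {v | Fin.append t 0 + v ∈ systematicCode A} ↔
      t ᵥ* A + x ᵥ* A = y := by
    intro x y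
    rw [Set.mem_ofPred_eq, append_add_append, append_mem_systematicCode, zero_add, add_vecMul]
  have h_right : ∀ x y, Fin.append x y ∈ {v | Fin.append t 0 + v ∈ systematicCode A} ↔
      t + y ᵥ* Aᵀ = x := by
    intro x y
    rw [Set.mem_ofPred_eq, append_add_append, append_mem_systematicCode, zero_add,
      vecMul_eq_iff_add_mulVec_eq_zero hA, vecMul_transpose, add_right_comm,
      ← ZModModule.sub_eq_add, sub_eq_zero]
  simp only [weightCount_two_mul_of_append_mem_iff h_left h_right, cosetSearchCount,
    ← row_transpose, xorCount_ofFn_encode hn, splitCount]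

theorem weightCount_systematicCode (hA : A * Aᵀ = -1) (hn : n < 63) (m : ℕ) :
    weightCount (systematicCode A : Set (Fin (n + n) → ZMod 2)) (2 * m) =
      cosetSearchCount A 0 m := by
  have h_zero : Fin.append (0 : Fin n → ZMod 2) (0 : Fin n → ZMod 2) = 0 := by
    ext i
    exact Fin.addCases (fun i => Fin.append_left _ _ i) (fun i => Fin.append_right _ _ i) i
  simp only [← weightCount_coset_systematicCode hA hn, h_zero, zero_add]
  rfl

theorem weightCount_codeShadow_systematicCode (hA : A * Aᵀ = -1) (hn : n < 63)
    (ht : Fin.append t 0 ∈ codeShadow (systematicCode A)) (m : ℕ) :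
    weightCount (codeShadow (systematicCode A)) (2 * m) = cosetSearchCount A t m := by
  rw [← weightCount_coset_systematicCode hA hn]
  congr 1
  ext v
  rw [mem_codeShadow_iff_add_mem_dualCode ht, ← isSelfDual_systematicCode hA]
  rfl

end CosetSearch

section ConcreteCode

/-- The rows of the right half `A` of the generator matrix `[I | A]`; bit `j` of a row is its
coordinate `j`. -/
def rowMask : Fin 34 → ℕ :=
  ![0x163E515FF, 0x1C6DF88DF, 0x01BC36F7F, 0x3F03929FF, 0x37678BEFF, 0x02D29A47F,
    0x3A6966441, 0x04B217101, 0x2A7A32E01, 0x2FEBFE4E1, 0x3A13A1E81, 0x2EEA9CAE2,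
    0x1674B8C82, 0x229846822, 0x109A575A2, 0x0BC529AC2, 0x0556287E4, 0x0128EA064,
    0x35D7DB7E4, 0x0CDA9A8A4, 0x3C2A9F9E4, 0x15BAE55E8, 0x0E30F86A8, 0x09C93BC48,
    0x278498F48, 0x349EA2168, 0x1AD23C390, 0x37812EC90, 0x0A0114E70, 0x20EBA2E30,
    0x06E0B8E70, 0x2C703A760, 0x02A64C4C0, 0x112989C40]

/-- The right half `A` of the generator matrix `[I | A]` of the code. -/
def rightMatrix : Matrix (Fin 34) (Fin 34) (ZMod 2) :=
  of fun i j => if (rowMask i).testBit j then 1 else 0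

/-- The left half of a shadow vector whose right half is zero. -/
def shadowHead : Fin 34 → ZMod 2 := fun i => if i < 6 then 1 else 0

theorem rightMatrix_mul_transpose : rightMatrix * rightMatrixᵀ = -1 := by decide +kernel

theorem hammingNorm_append_shadowHead :
    hammingNorm (Fin.append shadowHead (0 : Fin 34 → ZMod 2)) = 6 := by
  decide +kernel

theorem append_shadowHead_mem_codeShadow :
    Fin.append shadowHead 0 ∈ codeShadow (systematicCode rightMatrix) := by
  have h_rows : ∀ i, hammingNorm (systematicMatrix rightMatrix i) ≡
      2 * (Fin.append shadowHead 0 ⬝ᵥ systematicMatrix rightMatrix i).val [MOD 4] := by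
    decide +kernel
  exact mem_codeShadow_span (isSelfDual_systematicCode rightMatrix_mul_transpose).le
    (Set.forall_mem_range.mpr h_rows)

theorem cosetSearchCount_rightMatrix_zero :
    ∀ m ∈ Icc 1 5, cosetSearchCount rightMatrix 0 m = 0 := by
  decide +kernel

theorem cosetSearchCount_rightMatrix_shadowHead :
    cosetSearchCount rightMatrix shadowHead 1 = 0 ∧
      cosetSearchCount rightMatrix shadowHead 3 = 6 ∧
      cosetSearchCount rightMatrix shadowHead 5 = 47 := by
  decide +kernel

theorem twelve_le_hammingNorm_of_mem_systematicCode_rightMatrix {v : Fin (34 + 34) → ZMod 2}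
    (hv : v ∈ systematicCode rightMatrix) (hv₀ : v ≠ 0) : 12 ≤ hammingNorm v := by
  obtain ⟨m, hm⟩ := even_iff_exists_two_mul.mp <| even_hammingNorm_of_le_dualCode
    (isSelfDual_systematicCode rightMatrix_mul_transpose).le hv
  have h_pos := hammingNorm_pos_iff.mpr hv₀
  by_contra! h_lt
  have h_count : weightCount (systematicCode rightMatrix : Set (Fin (34 + 34) → ZMod 2))
      (2 * m) = 0 := by
    rw [weightCount_systematicCode rightMatrix_mul_transpose (by norm_num)]
    exact cosetSearchCount_rightMatrix_zero m (mem_Icc.mpr (by omega))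
  exact weightCount_eq_zero_iff.mp h_count v hv hm

theorem weightCount_systematicCode_rightMatrix :
    weightCount (systematicCode rightMatrix : Set (Fin (34 + 34) → ZMod 2)) 12 = 966 ∧
      weightCount (systematicCode rightMatrix : Set (Fin (34 + 34) → ZMod 2)) 14 = 12376 := by
  have h_selfDual := isSelfDual_systematicCode rightMatrix_mul_transpose
  have h_mem := append_shadowHead_mem_codeShadow
  have h_shadow := weightCount_codeShadow_systematicCode rightMatrix_mul_transpose (by norm_num)
    h_mem
  obtain ⟨h_two, h_six, h_ten⟩ := cosetSearchCount_rightMatrix_shadowHead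
  rw [← h_shadow] at h_two h_six h_ten
  have h_enumerator := weightCount_twelve_and_fourteen (β := 131) (γ := 6) (Fintype.card_fin _)
    h_selfDual h_mem (by rw [hammingNorm_append_shadowHead]; rfl)
    (fun _ => twelve_le_hammingNorm_of_mem_systematicCode_rightMatrix) h_two
    (congrArg Nat.cast h_six) (congrArg Nat.cast h_ten)
  norm_num at h_enumerator
  exact_mod_cast h_enumerator

end ConcreteCode

/-- There exists a binary self-dual `[68, 34, 12]` code with weight enumerator
`W_{68,2}` (γ = 6, β = 131): minimum nonzero weight 12, exactly 966 codewords of weight 12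
and exactly 12376 codewords of weight 14. -/
theorem exists_selfDual_68_17 :
    ∃ C : Submodule (ZMod 2) (Fin 68 → ZMod 2),
      IsSelfDual C ∧
      (∀ v ∈ C, v ≠ 0 → 12 ≤ hammingNorm v) ∧
      (∃ v ∈ C, hammingNorm v = 12) ∧
      {v | v ∈ C ∧ hammingNorm v = 12}.ncard = 966 ∧
      {v | v ∈ C ∧ hammingNorm v = 14}.ncard = 12376 := by
  obtain ⟨h_twelve, h_fourteen⟩ := weightCount_systematicCode_rightMatrix
  have h_exists : ∃ v ∈ systematicCode rightMatrix, hammingNorm v = 12 := by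
    by_contra! h_none
    rw [weightCount_eq_zero_iff.mpr h_none] at h_twelve
    exact absurd h_twelve (by norm_num)
  exact ⟨systematicCode rightMatrix, isSelfDual_systematicCode rightMatrix_mul_transpose,
    fun _ => twelve_le_hammingNorm_of_mem_systematicCode_rightMatrix, h_exists, h_twelve,
    h_fourteen⟩
end
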